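/- arXiv:1007.3395 — 9 statements merged into one kernel-verified Lean document; each statement's English description precedes it below -/
import Mathlib

section
/- Let n > 1. Under the hypotheses below (μ, ν symmetrically suitable Borel probability measures on Sⁿ, γ an optimal coupling of (μ, ν) for the quadratic cost, and t⁺, t⁻ the Gangbo–McCann outer and inner maps), define the degenerate target set T₀ := t⁺(S₀) and the bivalent target set T₂ := t⁻(S₂). Then t⁺ is locally Hölder continuous with exponent 1/(4n−1) on the set (t⁺)⁻¹(Sⁿ \ (T₀ ∪ T₂)). -/
/-!
The support of the optimal coupling `γ` is monotone: `0 ≤ ⟪a - a', b - b'⟫` for any two of its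
points (`inner_nonneg_of_mem_support`). A point `x` whose image `t⁺ x` avoids `T₂` gives a point
`(x, t⁺ x)` of this support, because `ν` charges every open subset of the sphere and `t⁺` is
injective (`mem_support_of_notMem_T2`). If `t⁺ x` also avoids `T₀`, then `⟪x, t⁺ x⟫ > 0`, and by
continuity `⟪t⁺ x', x⟫ ≥ κ > 0` for all `x, x'` in a neighbourhood.

Take two such points `e` and `x` at distance `d`, with images `y₀` and `y₁` at distance `δ`, and
choose `r` with `r² = 192 d / (κ δ)`. Let `N` be the part of the sphere lying, in the direction `e`,
above the middle half of the chord `[y₀, y₁]` thickened by about `r δ²`. The sphere is strictly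
convex, so points of `N` lie higher than the chord by a multiple of `δ²`. Combining the
monotonicity inequalities against `(e, y₀)` and `(x, y₁)`, every mass that `γ` sends into `N` starts
in the ball of radius `r` around `e` (`contact_point_near`). Therefore `ν N ≤ μ (closedBall e r)`.

Up to constants the left side is at least `δ (r δ²) ^ (n - 1)` (`exists_thick_chord`) and the right
side is at most `r ^ n` (`exists_sphereMeasure_closedBall_le`). Hence `δ ^ (2 n - 1) ≤ C r`, that is
`δ ^ (4 n - 1) ≤ C d` (`exists_pow_norm_le`), which is the Hölder bound. When `r > 1` the estimate is
immediate, as then `κ δ ≤ 192 d`.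
-/

open MeasureTheory Metric Set
open scoped RealInnerProductSpace ENNReal NNReal

noncomputable section

/-- Euclidean space `ℝ^{n+1}`. -/
abbrev Euc (n : ℕ) := EuclideanSpace ℝ (Fin (n + 1))

/-- The unit sphere `Sⁿ ⊂ ℝ^{n+1}`. -/
def unitSphere (n : ℕ) : Set (Euc n) := Metric.sphere (0 : Euc n) 1

/-- `σ`: the `n`-dimensional Hausdorff measure restricted to the unit sphere. -/
def sphereMeasure (n : ℕ) : Measure (Euc n) :=
  (μH[(n : ℝ)]).restrict (unitSphere n)

/-- Borel probability measures `μ, ν` on `Sⁿ` are symmetrically suitable if there is `ε > 0`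
with `ε·σ ≤ μ ≤ ε⁻¹·σ` and `ε·σ ≤ ν ≤ ε⁻¹·σ`. -/
def SymmetricallySuitable (n : ℕ) (μ ν : Measure (Euc n)) : Prop :=
  IsProbabilityMeasure μ ∧ IsProbabilityMeasure ν ∧
  ∃ ε : ℝ≥0∞, 0 < ε ∧ ε ≠ ⊤ ∧
    ε • sphereMeasure n ≤ μ ∧ μ ≤ ε⁻¹ • sphereMeasure n ∧
    ε • sphereMeasure n ≤ ν ∧ ν ≤ ε⁻¹ • sphereMeasure n

/-- A coupling of `(μ, ν)`: a Borel probability measure on the product whose marginals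
are `μ` and `ν`. -/
def IsCoupling (n : ℕ) (μ ν : Measure (Euc n)) (γ : Measure (Euc n × Euc n)) : Prop :=
  IsProbabilityMeasure γ ∧ γ.map Prod.fst = μ ∧ γ.map Prod.snd = ν

/-- The quadratic transport cost of a plan `γ`. -/
def transportCost (n : ℕ) (γ : Measure (Euc n × Euc n)) : ℝ≥0∞ :=
  ∫⁻ p, ENNReal.ofReal (‖p.1 - p.2‖ ^ 2) ∂γ

/-- `γ` is an optimal coupling of `(μ, ν)` for the quadratic cost. -/
def IsOptimalCoupling (n : ℕ) (μ ν : Measure (Euc n)) (γ : Measure (Euc n × Euc n)) : Prop :=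
  IsCoupling n μ ν γ ∧ ∀ γ' : Measure (Euc n × Euc n), IsCoupling n μ ν γ' →
    transportCost n γ ≤ transportCost n γ'

/-- The Gangbo–McCann structure: `t⁺ : Sⁿ → Sⁿ` is a homeomorphism (a continuous bijection of
the compact sphere) and `t⁻ : Sⁿ → Sⁿ` is continuous, `γ` is concentrated on the union of their
graphs, `t⁺(x) = t⁻(x)` implies `x·t⁺(x) ≥ 0`, and at every bivalent point
`t⁺(x) − t⁻(x) = λ(x)x` with `λ(x) > 0`, `x·t⁺(x) > 0` and `x·t⁻(x) < 0`. -/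
def GangboMcCannMaps (n : ℕ) (γ : Measure (Euc n × Euc n))
    (tp tm : Euc n → Euc n) : Prop :=
  ContinuousOn tp (unitSphere n) ∧ BijOn tp (unitSphere n) (unitSphere n) ∧
  ContinuousOn tm (unitSphere n) ∧ MapsTo tm (unitSphere n) (unitSphere n) ∧
  γ {p : Euc n × Euc n | p.2 ≠ tp p.1 ∧ p.2 ≠ tm p.1} = 0 ∧
  (∀ x ∈ unitSphere n, tp x = tm x → 0 ≤ ⟪x, tp x⟫) ∧
  (∀ x ∈ unitSphere n, tp x ≠ tm x →
    (∃ l : ℝ, 0 < l ∧ tp x - tm x = l • x) ∧ 0 < ⟪x, tp x⟫ ∧ ⟪x, tm x⟫ < 0)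

/-- `f` is locally Hölder with exponent `α` on `A`: every point of `A` has a relative
neighborhood `U ⊆ A` and a constant `C` with `|f x₁ − f x₀| ≤ C|x₁ − x₀|^α` on `U`. -/
def LocallyHolderOn (n : ℕ) (f : Euc n → Euc n) (A : Set (Euc n)) (α : ℝ) : Prop :=
  ∀ x ∈ A, ∃ U ∈ nhdsWithin x A, U ⊆ A ∧ ∃ C : ℝ,
    ∀ x₀ ∈ U, ∀ x₁ ∈ U, ‖f x₁ - f x₀‖ ≤ C * ‖x₁ - x₀‖ ^ α

/-! ### Monotone pairs above a chord of the sphere -/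

/-- Let `Y = (1 - θ) y₀ + θ y₁` be a point in the middle half of a chord of the sphere, and let
`y = Y + ξ + τ e` be the point of the sphere above `Y + ξ` in the direction `e`. By strict
convexity of the ball `Y` lies at depth of order `‖y₀ - y₁‖²` inside it, hence so does `Y + ξ`
when `ξ` is small, and `τ` is at least of that order. The second bound keeps `y` close to `y₁`. -/
theorem height_gap {E : Type*} [NormedAddCommGroup E] [InnerProductSpace ℝ E]
    {e y₀ y₁ y ξ : E} {κ θ τ : ℝ}
    (he : ‖e‖ = 1) (hy₀ : ‖y₀‖ = 1) (hy₁ : ‖y₁‖ = 1) (hy : ‖y‖ = 1)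
    (hκ : 0 < κ) (h₀ : κ ≤ ⟪y₀, e⟫) (h₁ : κ ≤ ⟪y₁, e⟫) (hye : 0 < ⟪y, e⟫)
    (hθ : 1 / 4 ≤ θ) (hθ' : θ ≤ 3 / 4) (hξe : ⟪ξ, e⟫ = 0)
    (hyξ : y = (1 - θ) • y₀ + θ • y₁ + ξ + τ • e)
    (hδ : 0 < ‖y₀ - y₁‖) (hw : ‖ξ‖ ≤ ‖y₀ - y₁‖ ^ 2 / 128) :
    3 / 64 * ‖y₀ - y₁‖ ^ 2 ≤ τ ∧ κ * ‖y - y₁‖ ≤ 3 * ‖y₀ - y₁‖ := by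
  set δ := ‖y₀ - y₁‖ with hδdef
  set H := (1 - θ) * ⟪y₀, e⟫ + θ * ⟪y₁, e⟫ with hH
  have hHκ : κ ≤ H := by
    have h1 := mul_le_mul_of_nonneg_left h₀ (by linarith : 0 ≤ 1 - θ)
    have h2 := mul_le_mul_of_nonneg_left h₁ (by linarith : 0 ≤ θ)
    linarith
  set Y := (1 - θ) • y₀ + θ • y₁ with hY
  have hYe : ⟪Y, e⟫ = H := by
    rw [hY, inner_add_left, real_inner_smul_left, real_inner_smul_left]
  have hδsq : δ ^ 2 = 2 - 2 * ⟪y₀, y₁⟫ := by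
    rw [hδdef, norm_sub_sq_real, hy₀, hy₁]; ring
  have hδ2 : δ ≤ 2 := by
    calc δ ≤ ‖y₀‖ + ‖y₁‖ := norm_sub_le _ _
      _ = 2 := by rw [hy₀, hy₁]; norm_num
  have hδδ : δ ^ 2 ≤ 2 * δ := by nlinarith only [hδ2, hδ]
  have hθθ : 3 / 16 ≤ θ * (1 - θ) := by
    nlinarith only [mul_nonneg (sub_nonneg.2 hθ) (sub_nonneg.2 hθ')]
  have hθθ' : θ * (1 - θ) ≤ 1 / 4 := by nlinarith only [sq_nonneg (θ - 1 / 2)]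
  have hYsq : ‖Y‖ ^ 2 = 1 - θ * (1 - θ) * δ ^ 2 := by
    rw [hY, norm_add_sq_real, norm_smul, norm_smul, real_inner_smul_left, real_inner_smul_right,
      hy₀, hy₁, hδsq, mul_one, mul_one, Real.norm_eq_abs, Real.norm_eq_abs, sq_abs, sq_abs]
    ring
  have hlo := mul_le_mul_of_nonneg_right hθθ (sq_nonneg δ)
  have hhi := mul_le_mul_of_nonneg_right hθθ' (sq_nonneg δ)
  have hY1 : ‖Y‖ ≤ 1 := by
    have : ‖Y‖ ^ 2 ≤ 1 ^ 2 := by rw [hYsq]; linarith [sq_nonneg δ]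
    exact (sq_le_sq₀ (norm_nonneg _) zero_le_one).1 this
  have hyeH : ⟪y, e⟫ = H + τ := by
    rw [hyξ, inner_add_left, inner_add_left, hYe, hξe, real_inner_smul_left,
      real_inner_self_eq_norm_sq, he]; ring
  have hye1 : ⟪y, e⟫ ≤ 1 := by
    have := real_inner_le_norm y e; rw [hy, he] at this; linarith
  have hw1 : ‖ξ‖ ≤ 1 := by linarith
  have hww : ‖ξ‖ ^ 2 ≤ ‖ξ‖ := by nlinarith only [hw1, norm_nonneg ξ]
  have hYξ : |⟪Y, ξ⟫| ≤ ‖ξ‖ := by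
    have := abs_real_inner_le_norm Y ξ
    have := mul_le_mul_of_nonneg_right hY1 (norm_nonneg ξ)
    linarith
  have hexp : τ * (2 * H + τ) = θ * (1 - θ) * δ ^ 2 - 2 * ⟪Y, ξ⟫ - ‖ξ‖ ^ 2 := by
    have h1 : ‖y‖ ^ 2 = ‖Y‖ ^ 2 + 2 * ⟪Y, ξ⟫ + ‖ξ‖ ^ 2 + 2 * (τ * H) + τ ^ 2 := by
      rw [hyξ, norm_add_sq_real, norm_add_sq_real, real_inner_smul_right,
        inner_add_left Y ξ, hYe, hξe, norm_smul, he, Real.norm_eq_abs, mul_one, sq_abs]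
      ring
    rw [hy, hYsq] at h1; linarith
  have hYξ' := abs_le.1 hYξ
  have hδ0 : 0 < δ ^ 2 := by positivity
  have hlow : 3 / 32 * δ ^ 2 ≤ τ * (2 * H + τ) := by
    rw [hexp]; linarith [norm_nonneg ξ]
  have hup : τ * (2 * H + τ) ≤ δ ^ 2 := by
    rw [hexp]; linarith [norm_nonneg ξ, sq_nonneg ‖ξ‖]
  have hpos : 0 < 2 * H + τ := by linarith
  have hτ0 : 0 < τ := by
    by_contra hcon
    push Not at hcon
    have := mul_nonpos_of_nonpos_of_nonneg hcon hpos.le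
    linarith
  have hH1 : 2 * H + τ ≤ 2 := by linarith
  have hτlow : 3 / 64 * δ ^ 2 ≤ τ := by
    have := mul_le_mul_of_nonneg_left hH1 hτ0.le
    linarith
  have hτup : κ * τ ≤ δ := by
    have := mul_le_mul_of_nonneg_left (by linarith : 2 * κ ≤ 2 * H + τ) hτ0.le
    linarith
  refine ⟨hτlow, ?_⟩
  have hκ1 : κ ≤ 1 := by linarith
  have h1 : y - y₁ = (1 - θ) • (y₀ - y₁) + ξ + τ • e := by
    rw [hyξ, hY]; module
  have h2 : ‖y - y₁‖ ≤ (1 - θ) * δ + ‖ξ‖ + τ := by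
    rw [h1]
    refine (norm_add_le _ _).trans (add_le_add ((norm_add_le _ _).trans ?_) ?_)
    · rw [norm_smul, Real.norm_of_nonneg (by linarith)]
    · rw [norm_smul, he, Real.norm_of_nonneg hτ0.le, mul_one]
  have hp : 0 ≤ (1 - θ) * δ := mul_nonneg (by linarith) hδ.le
  have h3 : (1 - θ) * δ + ‖ξ‖ ≤ 2 * δ := by
    have := mul_le_mul_of_nonneg_right (by linarith : 1 - θ ≤ 1) hδ.le
    linarith
  have h4 : κ * ((1 - θ) * δ + ‖ξ‖) ≤ 1 * (2 * δ) :=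
    mul_le_mul hκ1 h3 (by positivity) zero_le_one
  have h5 := mul_le_mul_of_nonneg_left h2 hκ.le
  linarith

/-- If `(z, y)` is monotonically related to both `(e, y₀)` and `(x, y₁)`, where `y` lies above the
thickened middle half of the chord `[y₀, y₁]`, then `z` is close to `e`. A convex combination of
the two monotonicity inequalities gives
`τ ‖z - e‖² / 2 ≤ ‖z - e‖ ‖ξ‖ + ‖x - e‖ ‖y - y₁‖` with `τ` bounded below by `height_gap`, because
`⟪z - e, e⟫ = -‖z - e‖² / 2` on the unit sphere. -/
theorem contact_point_near {E : Type*} [NormedAddCommGroup E] [InnerProductSpace ℝ E]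
    {e x y₀ y₁ z y ξ : E} {κ θ r τ : ℝ}
    (he : ‖e‖ = 1) (hy₀ : ‖y₀‖ = 1) (hy₁ : ‖y₁‖ = 1) (hz : ‖z‖ = 1) (hy : ‖y‖ = 1)
    (hκ : 0 < κ) (h₀ : κ ≤ ⟪y₀, e⟫) (h₁ : κ ≤ ⟪y₁, e⟫) (hye : 0 < ⟪y, e⟫)
    (hθ : 1 / 4 ≤ θ) (hθ' : θ ≤ 3 / 4) (hξe : ⟪ξ, e⟫ = 0)
    (hyξ : y = (1 - θ) • y₀ + θ • y₁ + ξ + τ • e)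
    (hδ : 0 < ‖y₀ - y₁‖) (hr : 0 ≤ r) (hr1 : r ≤ 1)
    (hξ : ‖ξ‖ ≤ r * ‖y₀ - y₁‖ ^ 2 / 128)
    (hrd : 192 * ‖x - e‖ ≤ r ^ 2 * κ * ‖y₀ - y₁‖)
    (hm₀ : 0 ≤ ⟪z - e, y - y₀⟫) (hm₁ : 0 ≤ ⟪z - x, y - y₁⟫) :
    ‖z - e‖ ≤ r := by
  have hw : ‖ξ‖ ≤ ‖y₀ - y₁‖ ^ 2 / 128 := by
    have := mul_le_mul_of_nonneg_right hr1 (sq_nonneg ‖y₀ - y₁‖)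
    linarith
  obtain ⟨hτlow, hyy₁⟩ := height_gap he hy₀ hy₁ hy hκ h₀ h₁ hye hθ hθ' hξe hyξ hδ hw
  set δ := ‖y₀ - y₁‖ with hδdef
  set ρ := ‖z - e‖ with hρ
  have hρ0 : 0 ≤ ρ := norm_nonneg _
  have hze : ⟪z - e, e⟫ = - (ρ ^ 2 / 2) := by
    rw [hρ, norm_sub_sq_real, inner_sub_left, real_inner_self_eq_norm_sq, hz, he]; ring
  have hzξ : ⟪z - e, ξ⟫ ≤ ρ * ‖ξ‖ := real_inner_le_norm _ _
  have hD : 0 ≤ ‖x - e‖ * ‖y - y₁‖ := by positivity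
  have hx : -(‖x - e‖ * ‖y - y₁‖) ≤ ⟪z - e, y - y₁⟫ := by
    have h1 : z - e = (z - x) + (x - e) := by abel
    have h2 := (abs_le.1 (abs_real_inner_le_norm (x - e) (y - y₁))).1
    rw [h1, inner_add_left]; linarith
  have hcomb : (1 - θ) * ⟪z - e, y - y₀⟫ + θ * ⟪z - e, y - y₁⟫
      = ⟪z - e, ξ⟫ + τ * ⟪z - e, e⟫ := by
    have h2 : (1 - θ) • (y - y₀) + θ • (y - y₁) = ξ + τ • e := by
      rw [hyξ]; module
    rw [← real_inner_smul_right, ← real_inner_smul_right, ← inner_add_right, h2, inner_add_right,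
      real_inner_smul_right]
  rw [hze] at hcomb
  by_contra hcon
  push Not at hcon
  have hmain : τ * (ρ ^ 2 / 2) ≤ ρ * ‖ξ‖ + ‖x - e‖ * ‖y - y₁‖ := by
    have h1 := mul_nonneg (by linarith : 0 ≤ 1 - θ) hm₀
    have h2 := mul_le_mul_of_nonneg_left hx (by linarith : 0 ≤ θ)
    have h3 := mul_le_mul_of_nonneg_right (by linarith : θ ≤ 1) hD
    linarith
  have hρξ : ρ * ‖ξ‖ ≤ ρ ^ 2 * δ ^ 2 / 128 := by
    have h1 : ‖ξ‖ ≤ ρ * δ ^ 2 / 128 := by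
      have := mul_le_mul_of_nonneg_right hcon.le (sq_nonneg δ)
      linarith
    have := mul_le_mul_of_nonneg_left h1 hρ0
    linarith
  have hτρ := mul_le_mul_of_nonneg_right hτlow (by positivity : 0 ≤ ρ ^ 2 / 2)
  have h64 : δ ^ 2 * ρ ^ 2 / 64 ≤ ‖x - e‖ * ‖y - y₁‖ := by linarith
  have h65 := mul_le_mul_of_nonneg_left h64 hκ.le
  have h66 := mul_le_mul_of_nonneg_left hyy₁ (norm_nonneg (x - e))
  have h67 := mul_le_mul_of_nonneg_right hrd hδ.le
  have h68 : r ^ 2 < ρ ^ 2 := by gcongr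
  have h69 : 0 < κ * δ ^ 2 := by positivity
  have h70 := mul_lt_mul_of_pos_left h68 h69
  linarith

/-! ### Coordinates and the measure of boxes and caps on the sphere -/

theorem exists_basis_zero (n : ℕ) {e : Euc n} (he : ‖e‖ = 1) :
    ∃ b : OrthonormalBasis (Fin (n + 1)) ℝ (Euc n), b 0 = e := by
  have hv : Orthonormal ℝ (({0} : Set (Fin (n + 1))).domRestrict fun _ => e) := by
    refine ⟨fun i => he, fun i j hij => (hij ?_).elim⟩
    exact Subtype.ext ((mem_singleton_iff.1 i.2).trans (mem_singleton_iff.1 j.2).symm)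
  obtain ⟨b, hb⟩ := hv.exists_orthonormalBasis_extension_of_card_eq (by simp)
  exact ⟨b, hb 0 rfl⟩

/-- Two orthogonal unit vectors are the first two members of an orthonormal basis. -/
theorem exists_basis_zero_one (m : ℕ) {e q : Euc (m + 1)} (he : ‖e‖ = 1) (hq : ‖q‖ = 1)
    (heq : ⟪e, q⟫ = 0) :
    ∃ b : OrthonormalBasis (Fin (m + 1 + 1)) ℝ (Euc (m + 1)),
      b 0 = e ∧ b (Fin.succ 0) = q := by
  have hv : Orthonormal ℝ (({0, Fin.succ 0} : Set (Fin (m + 1 + 1))).domRestrict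
      fun i => if i = 0 then e else q) := by
    refine ⟨?_, ?_⟩
    · rintro ⟨i, rfl | rfl⟩
      · simpa using he
      · simpa using hq
    · rintro ⟨i, rfl | rfl⟩ ⟨j, rfl | rfl⟩ hij
      · exact (hij rfl).elim
      · simpa using heq
      · simpa [real_inner_comm] using heq
      · exact (hij rfl).elim
  obtain ⟨b, hb⟩ := hv.exists_orthonormalBasis_extension_of_card_eq (by simp)
  exact ⟨b, by simpa using hb 0 (by simp), by simpa using hb (Fin.succ 0) (by simp)⟩

theorem norm_sq_eq_coords {n : ℕ} (b : OrthonormalBasis (Fin (n + 1)) ℝ (Euc n)) (y : Euc n) :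
    ‖y‖ ^ 2 = ⟪y, b 0⟫ ^ 2 + ∑ i : Fin n, ⟪y, b i.succ⟫ ^ 2 := by
  rw [← b.sum_sq_norm_inner_left y, Fin.sum_univ_succ]
  simp

theorem eq_of_coords {n : ℕ} (b : OrthonormalBasis (Fin (n + 1)) ℝ (Euc n)) (y : Euc n) :
    y = ⟪y, b 0⟫ • b 0 + ∑ i : Fin n, ⟪y, b i.succ⟫ • b i.succ := by
  conv_lhs => rw [← b.sum_repr' y, Fin.sum_univ_succ]
  simp [real_inner_comm]

theorem inner_comb_zero {n : ℕ} (b : OrthonormalBasis (Fin (n + 1)) ℝ (Euc n)) (s : ℝ)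
    (u : Fin n → ℝ) : ⟪s • b 0 + ∑ i, u i • b i.succ, b 0⟫ = s := by
  simp [inner_add_left, sum_inner, real_inner_smul_left, b.inner_eq_ite, Fin.succ_ne_zero]

theorem inner_comb_succ {n : ℕ} (b : OrthonormalBasis (Fin (n + 1)) ℝ (Euc n)) (s : ℝ)
    (u : Fin n → ℝ) (j : Fin n) : ⟪s • b 0 + ∑ i, u i • b i.succ, b j.succ⟫ = u j := by
  simp [inner_add_left, sum_inner, real_inner_smul_left, b.inner_eq_ite,
    (Fin.succ_ne_zero _).symm]

/-- A box contained in the open equatorial unit disc has volume at most the measure of the part of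
the upper hemisphere above it: the orthogonal projection is `1`-Lipschitz and maps that part onto
the box. On `Fin n → ℝ` with the sup metric, the `n`-dimensional Hausdorff measure is Lebesgue
measure. -/
theorem volume_box_le_sphereMeasure {n : ℕ} (b : OrthonormalBasis (Fin (n + 1)) ℝ (Euc n))
    (lo hi : Fin n → ℝ)
    (hbox : ∀ u : Fin n → ℝ, (∀ i, u i ∈ Icc (lo i) (hi i)) → ∑ i, u i ^ 2 < 1) :
    ∏ i, ENNReal.ofReal (hi i - lo i) ≤
      sphereMeasure n {y | 0 < ⟪y, b 0⟫ ∧ ∀ i : Fin n, ⟪y, b i.succ⟫ ∈ Icc (lo i) (hi i)} := by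
  set N := {y : Euc n | 0 < ⟪y, b 0⟫ ∧ ∀ i : Fin n, ⟪y, b i.succ⟫ ∈ Icc (lo i) (hi i)} with hN
  let F : Euc n → (Fin n → ℝ) := fun y i => ⟪y, b i.succ⟫
  have hF : LipschitzWith 1 F := by
    refine LipschitzWith.of_dist_le_mul fun x y => ?_
    rw [NNReal.coe_one, one_mul, dist_pi_le_iff dist_nonneg]
    intro i
    rw [Real.dist_eq, ← inner_sub_left, dist_eq_norm]
    simpa [b.norm_eq_one] using abs_real_inner_le_norm (x - y) (b i.succ)
  have himg : Icc lo hi ⊆ F '' (N ∩ unitSphere n) := by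
    intro u hu
    have hu' : ∀ i, u i ∈ Icc (lo i) (hi i) := fun i => ⟨hu.1 i, hu.2 i⟩
    have hlt := hbox u hu'
    refine ⟨√(1 - ∑ i, u i ^ 2) • b 0 + ∑ i, u i • b i.succ, ⟨⟨?_, ?_⟩, ?_⟩, ?_⟩
    · rw [inner_comb_zero]; exact Real.sqrt_pos.2 (by linarith)
    · intro i; rw [inner_comb_succ]; exact hu' i
    · have h1 := norm_sq_eq_coords b (√(1 - ∑ i, u i ^ 2) • b 0 + ∑ i, u i • b i.succ)
      simp only [inner_comb_zero, inner_comb_succ] at h1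
      rw [Real.sq_sqrt (by linarith), sub_add_cancel] at h1
      rw [unitSphere, mem_sphere_zero_iff_norm]
      exact (pow_eq_one_iff_of_nonneg (norm_nonneg _) two_ne_zero).1 h1
    · funext i; exact inner_comb_succ _ _ _ _
  have hvol : ∏ i, ENNReal.ofReal (hi i - lo i) = μH[(n : ℝ)] (Icc lo hi) := by
    have h := hausdorffMeasure_pi_real (ι := Fin n)
    rw [Fintype.card_fin] at h
    rw [h, Real.volume_Icc_pi]
  rw [hvol, sphereMeasure, Measure.restrict_apply' (by exact isClosed_sphere.measurableSet)]
  refine (measure_mono himg).trans ?_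
  simpa using hF.hausdorffMeasure_image_le (Nat.cast_nonneg n) (N ∩ unitSphere n)

/-- Radial projection onto the unit sphere is `1`-Lipschitz outside the unit ball. -/
theorem norm_normalize_sub_le {E : Type*} [NormedAddCommGroup E] [InnerProductSpace ℝ E]
    {v w : E} (hv : 1 ≤ ‖v‖) (hw : 1 ≤ ‖w‖) :
    ‖‖v‖⁻¹ • v - ‖w‖⁻¹ • w‖ ≤ ‖v - w‖ := by
  have hv0 : 0 < ‖v‖ := by linarith
  have hw0 : 0 < ‖w‖ := by linarith
  refine (sq_le_sq₀ (norm_nonneg _) (norm_nonneg _)).1 ?_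
  rw [norm_sub_sq_real, norm_sub_sq_real, real_inner_smul_left, real_inner_smul_right, norm_smul,
    norm_smul, norm_inv, norm_inv, norm_norm, norm_norm, inv_mul_cancel₀ hv0.ne',
    inv_mul_cancel₀ hw0.ne']
  have hc := real_inner_le_norm v w
  set c := ‖v‖⁻¹ * (‖w‖⁻¹ * ⟪v, w⟫) with hcdef
  have hin : ⟪v, w⟫ = ‖v‖ * ‖w‖ * c := by rw [hcdef]; field_simp
  rw [hin] at hc ⊢
  have hp : 0 < ‖v‖ * ‖w‖ := by positivity
  have hc1 : c ≤ 1 := by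
    by_contra hcon; push Not at hcon; nlinarith
  have hvw : 1 ≤ ‖v‖ * ‖w‖ := by nlinarith
  nlinarith [mul_nonneg (sub_nonneg.2 hc1) (sub_nonneg.2 hvw), sq_nonneg (‖v‖ - ‖w‖)]

/-- Small balls centred on the sphere have measure `O(r ^ n)`: central projection from the tangent
plane is Lipschitz and maps a cube of side `4 r` onto a set containing the spherical cap. -/
theorem exists_sphereMeasure_closedBall_le (n : ℕ) : ∃ C : ℝ, 0 < C ∧
    ∀ e ∈ unitSphere n, ∀ r : ℝ, 0 ≤ r → r ≤ 1 →
      sphereMeasure n (closedBall e r) ≤ ENNReal.ofReal (C * r ^ n) := by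
  refine ⟨(((n : ℝ) + 1) * 4) ^ n, by positivity, fun e he r hr hr1 => ?_⟩
  have he1 : ‖e‖ = 1 := mem_sphere_zero_iff_norm.1 he
  obtain ⟨b, hb⟩ := exists_basis_zero n he1
  let v : (Fin n → ℝ) → Euc n := fun u => (1 : ℝ) • b 0 + ∑ i, u i • b i.succ
  let G : (Fin n → ℝ) → Euc n := fun u => ‖v u‖⁻¹ • v u
  have hv1 : ∀ u, 1 ≤ ‖v u‖ := fun u => by
    have := real_inner_le_norm (v u) (b 0)
    rwa [inner_comb_zero, b.norm_eq_one, mul_one] at this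
  have hG : LipschitzWith ((n : ℝ≥0) + 1) G := by
    refine LipschitzWith.of_dist_le_mul fun u w => ?_
    rw [dist_eq_norm]
    refine (norm_normalize_sub_le (hv1 u) (hv1 w)).trans ?_
    have h1 : v u - v w = ∑ i, (u i - w i) • b i.succ := by
      simp only [v, sub_smul, Finset.sum_sub_distrib]; abel
    rw [h1]
    calc ‖∑ i, (u i - w i) • b i.succ‖ ≤ ∑ i : Fin n, ‖(u i - w i) • b i.succ‖ := norm_sum_le _ _
      _ ≤ ∑ i : Fin n, dist u w := by
          refine Finset.sum_le_sum fun i _ => ?_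
          rw [norm_smul, b.norm_eq_one, mul_one, ← dist_eq_norm]
          exact dist_le_pi_dist u w i
      _ = n * dist u w := by simp
      _ ≤ _ := by
          push_cast
          nlinarith [dist_nonneg (x := u) (y := w)]
  have hsub : closedBall e r ∩ unitSphere n ⊆
      G '' Icc (fun _ => -(2 * r)) (fun _ => 2 * r) := by
    rintro y ⟨hyr, hyS⟩
    have hy1 : ‖y‖ = 1 := mem_sphere_zero_iff_norm.1 hyS
    have hyr' : ‖y - b 0‖ ≤ r := by rw [hb, ← dist_eq_norm]; exact hyr
    set s := ⟪y, b 0⟫ with hs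
    have hs2 : 1 / 2 ≤ s := by
      have h1 : ‖y - b 0‖ ^ 2 = 2 - 2 * s := by
        rw [norm_sub_sq_real, hy1, b.norm_eq_one]; ring
      have h2 : ‖y - b 0‖ ^ 2 ≤ 1 ^ 2 := by
        gcongr; linarith
      linarith
    have hs0 : 0 < s := by linarith
    have hcoord : ∀ i : Fin n, |⟪y, b i.succ⟫| ≤ r := fun i => by
      have h1 := abs_real_inner_le_norm (y - b 0) (b i.succ)
      rw [inner_sub_left, b.inner_eq_ite 0 i.succ, if_neg (Fin.succ_ne_zero i).symm, sub_zero,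
        b.norm_eq_one, mul_one] at h1
      exact h1.trans hyr'
    have hvy : v (fun i => s⁻¹ * ⟪y, b i.succ⟫) = s⁻¹ • y := by
      conv_rhs => rw [eq_of_coords b y]
      simp only [v, smul_add, Finset.smul_sum, smul_smul]
      rw [← hs, inv_mul_cancel₀ hs0.ne']
    refine ⟨fun i => s⁻¹ * ⟪y, b i.succ⟫, ?_, ?_⟩
    · have hb2 : ∀ i : Fin n, |s⁻¹ * ⟪y, b i.succ⟫| ≤ 2 * r := fun i => by
        rw [abs_mul, abs_of_pos (inv_pos.2 hs0)]
        have : s⁻¹ ≤ 2 := by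
          rw [inv_le_comm₀ hs0 two_pos]; linarith
        exact mul_le_mul this (hcoord i) (abs_nonneg _) two_pos.le
      exact ⟨fun i => (abs_le.1 (hb2 i)).1, fun i => (abs_le.1 (hb2 i)).2⟩
    · simp only [G]
      rw [hvy, norm_smul, hy1, norm_inv, Real.norm_of_nonneg hs0.le, mul_one, inv_inv, smul_smul,
        mul_inv_cancel₀ hs0.ne', one_smul]
  have hvol : μH[(n : ℝ)] (Icc (fun _ : Fin n => -(2 * r)) (fun _ => 2 * r))
      = ENNReal.ofReal ((4 * r) ^ n) := by
    have h := hausdorffMeasure_pi_real (ι := Fin n)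
    rw [Fintype.card_fin] at h
    rw [h, Real.volume_Icc_pi, Finset.prod_const, Finset.card_univ, Fintype.card_fin,
      ENNReal.ofReal_pow (by positivity)]
    congr 2; ring
  rw [sphereMeasure, Measure.restrict_apply' (by exact isClosed_sphere.measurableSet)]
  refine (measure_mono hsub).trans
    ((hG.hausdorffMeasure_image_le (Nat.cast_nonneg n) _).trans ?_)
  have hK : (((n : ℝ≥0) + 1 : ℝ≥0) : ℝ≥0∞) = ENNReal.ofReal ((n : ℝ) + 1) := by
    rw [ENNReal.ofReal_add (by positivity) zero_le_one]; simp
  rw [hvol, ENNReal.rpow_natCast, hK, ← ENNReal.ofReal_pow (by positivity),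
    ← ENNReal.ofReal_mul (by positivity), ← mul_pow, ← mul_pow, mul_assoc]

/-! ### Monotonicity of the support of an optimal coupling -/

theorem exists_ball_cost_near {n : ℕ} (a b : Euc n) {η : ℝ} (hη : 0 < η) :
    ∃ s > 0, ∀ x ∈ ball a s, ∀ y ∈ ball b s, |‖x - y‖ ^ 2 - ‖a - b‖ ^ 2| < η := by
  have hc : Continuous fun p : Euc n × Euc n => ‖p.1 - p.2‖ ^ 2 := by fun_prop
  obtain ⟨s, hs, h⟩ := Metric.continuousAt_iff.1 (hc.continuousAt (x := (a, b))) η hη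
  refine ⟨s, hs, fun x hx y hy => ?_⟩
  have := @h (x, y) (by rw [Prod.dist_eq]; exact max_lt hx hy)
  rwa [Real.dist_eq] at this

set_option maxHeartbeats 800000 in
/-- The support of an optimal coupling is monotone. Otherwise a small amount of mass near `(a, b)`
and near `(a', b')` could be re-paired as near `(a, b')` and `(a', b)`, which keeps the marginals
and strictly lowers the cost. -/
theorem inner_nonneg_of_mem_support {n : ℕ} {μ ν : Measure (Euc n)}
    {γ : Measure (Euc n × Euc n)} (hopt : IsOptimalCoupling n μ ν γ)
    (hfin : transportCost n γ ≠ ⊤) {a b a' b' : Euc n}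
    (hp : (a, b) ∈ γ.support) (hp' : (a', b') ∈ γ.support) :
    0 ≤ ⟪a - a', b - b'⟫ := by
  by_contra hcon
  push Not at hcon
  set g := -⟪a - a', b - b'⟫ with hg
  have hg0 : 0 < g := by linarith
  have hid : ‖a - b‖ ^ 2 + ‖a' - b'‖ ^ 2 = ‖a - b'‖ ^ 2 + ‖a' - b‖ ^ 2 + 2 * g := by
    rw [hg]
    simp only [norm_sub_sq_real, inner_sub_left, inner_sub_right]
    ring
  obtain ⟨s₁, hs₁, H₁⟩ := exists_ball_cost_near a b (η := g / 4) (by linarith)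
  obtain ⟨s₂, hs₂, H₂⟩ := exists_ball_cost_near a' b' (η := g / 4) (by linarith)
  obtain ⟨s₃, hs₃, H₃⟩ := exists_ball_cost_near a b' (η := g / 4) (by linarith)
  obtain ⟨s₄, hs₄, H₄⟩ := exists_ball_cost_near a' b (η := g / 4) (by linarith)
  obtain ⟨s, hs, hs1, hs2, hs3, hs4⟩ :
      ∃ s > 0, s ≤ s₁ ∧ s ≤ s₂ ∧ s ≤ s₃ ∧ s ≤ s₄ :=
    ⟨min (min s₁ s₂) (min s₃ s₄), by positivity, by simp, by simp, by simp, by simp⟩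
  obtain ⟨⟨hγ, hγμ, hγν⟩, hmin⟩ := hopt
  set A₁ : Set (Euc n × Euc n) := ball a s ×ˢ ball b s with hA₁
  set A₂ : Set (Euc n × Euc n) := ball a' s ×ˢ ball b' s with hA₂
  have hmA₁ : MeasurableSet A₁ := measurableSet_ball.prod measurableSet_ball
  have hmA₂ : MeasurableSet A₂ := measurableSet_ball.prod measurableSet_ball
  have hpos₁ : γ A₁ ≠ 0 := ((Measure.mem_support_iff_forall _).1 hp A₁
    (prod_mem_nhds (ball_mem_nhds _ hs) (ball_mem_nhds _ hs))).ne'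
  have hpos₂ : γ A₂ ≠ 0 := ((Measure.mem_support_iff_forall _).1 hp' A₂
    (prod_mem_nhds (ball_mem_nhds _ hs) (ball_mem_nhds _ hs))).ne'
  set P₁ := (γ A₁)⁻¹ • γ.restrict A₁ with hP₁
  set P₂ := (γ A₂)⁻¹ • γ.restrict A₂ with hP₂
  have hprob₁ : IsProbabilityMeasure P₁ := ⟨by
    simp [hP₁, ENNReal.inv_mul_cancel hpos₁ (measure_ne_top _ _)]⟩
  have hprob₂ : IsProbabilityMeasure P₂ := ⟨by
    simp [hP₂, ENNReal.inv_mul_cancel hpos₂ (measure_ne_top _ _)]⟩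
  have hae₁ : ∀ᵐ p ∂P₁, p ∈ A₁ := Measure.ae_smul_measure (ae_restrict_mem hmA₁) _
  have hae₂ : ∀ᵐ p ∂P₂, p ∈ A₂ := Measure.ae_smul_measure (ae_restrict_mem hmA₂) _
  set c : ℝ≥0∞ := min (γ A₁) (γ A₂) / 2 with hc
  have hc0 : c ≠ 0 := by
    rw [hc]; exact (ENNReal.div_pos (by simp [hpos₁, hpos₂]) (by simp)).ne'
  have hctop : c ≠ ⊤ := by
    rw [hc]; exact ENNReal.div_ne_top
      (ne_top_of_le_ne_top (measure_ne_top γ A₁) (min_le_left _ _)) (by simp)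
  -- Each piece is at most half of `γ`, so that both can be removed at once.
  have hhalf : ∀ A : Set (Euc n × Euc n), γ A ≠ 0 → c ≤ γ A / 2 →
      c • ((γ A)⁻¹ • γ.restrict A) ≤ (2⁻¹ : ℝ≥0∞) • γ := by
    intro A hA hcA
    rw [smul_smul]
    refine Measure.le_iff'.2 fun t => ?_
    simp only [Measure.smul_apply, smul_eq_mul]
    refine mul_le_mul' ?_ (Measure.restrict_le_self t)
    calc c * (γ A)⁻¹ ≤ γ A / 2 * (γ A)⁻¹ := by gcongr
      _ = 2⁻¹ := by
        rw [div_eq_mul_inv, mul_right_comm, ENNReal.mul_inv_cancel hA (measure_ne_top _ _),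
          one_mul]
  have hle : c • P₁ + c • P₂ ≤ γ := by
    calc c • P₁ + c • P₂ ≤ (2⁻¹ : ℝ≥0∞) • γ + (2⁻¹ : ℝ≥0∞) • γ :=
          add_le_add (hhalf A₁ hpos₁ (ENNReal.div_le_div_right (min_le_left _ _) _))
            (hhalf A₂ hpos₂ (ENNReal.div_le_div_right (min_le_right _ _) _))
      _ = γ := by rw [← add_smul, ENNReal.inv_two_add_inv_two, one_smul]
  have hfinP : IsFiniteMeasure (c • P₁ + c • P₂) :=
    ⟨(hle univ).trans_lt (measure_lt_top γ univ)⟩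
  set ρ := γ - (c • P₁ + c • P₂) with hρ
  have hdec : γ = ρ + (c • P₁ + c • P₂) := (Measure.sub_add_cancel_of_le hle).symm
  have hf : Measurable (Prod.fst : Euc n × Euc n → Euc n) := measurable_fst
  have hsn : Measurable (Prod.snd : Euc n × Euc n → Euc n) := measurable_snd
  have : IsProbabilityMeasure (P₁.map Prod.fst) := Measure.isProbabilityMeasure_map hf.aemeasurable
  have : IsProbabilityMeasure (P₂.map Prod.fst) := Measure.isProbabilityMeasure_map hf.aemeasurable
  have : IsProbabilityMeasure (P₁.map Prod.snd) := Measure.isProbabilityMeasure_map hsn.aemeasurable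
  have : IsProbabilityMeasure (P₂.map Prod.snd) := Measure.isProbabilityMeasure_map hsn.aemeasurable
  -- `Q₁` and `Q₂` re-pair the marginals of the two removed pieces.
  set Q₁ := (P₁.map Prod.fst).prod (P₂.map Prod.snd) with hQ₁
  set Q₂ := (P₂.map Prod.fst).prod (P₁.map Prod.snd) with hQ₂
  set γ' := ρ + (c • Q₁ + c • Q₂) with hγ'
  have hfst : γ'.map Prod.fst = μ := by
    rw [← hγμ, hdec, hγ']
    simp [Measure.map_add _ _ hf, Measure.map_smul, hQ₁, hQ₂]
  have hsnd : γ'.map Prod.snd = ν := by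
    rw [← hγν, hdec, hγ', add_comm (c • Q₁)]
    simp [Measure.map_add _ _ hsn, Measure.map_smul, hQ₁, hQ₂]
  have hcoup : IsCoupling n μ ν γ' := by
    refine ⟨⟨?_⟩, hfst, hsnd⟩
    have h1 : γ'.map Prod.fst univ = 1 := by
      rw [hfst, ← hγμ, Measure.map_apply hf MeasurableSet.univ, preimage_univ, measure_univ]
    rwa [Measure.map_apply hf MeasurableSet.univ, preimage_univ] at h1
  have hcost := hmin γ' hcoup
  have hT : ∀ R₁ R₂ : Measure (Euc n × Euc n), transportCost n (ρ + (c • R₁ + c • R₂)) =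
      transportCost n ρ + c * (transportCost n R₁ + transportCost n R₂) := by
    intro R₁ R₂
    simp only [transportCost, lintegral_add_measure, lintegral_smul_measure, smul_eq_mul, mul_add]
  rw [hγ', hT] at hcost
  have hTγ := hT P₁ P₂
  rw [← hdec] at hTγ
  have hρfin : transportCost n ρ ≠ ⊤ := by
    intro h; rw [h, top_add] at hTγ; exact hfin hTγ
  rw [hTγ, ENNReal.add_le_add_iff_left hρfin, ENNReal.mul_le_mul_iff_right hc0 hctop] at hcost
  have hlow : ∀ (P : Measure (Euc n × Euc n)) [IsProbabilityMeasure P] (t : ℝ),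
      (∀ᵐ p ∂P, t ≤ ‖p.1 - p.2‖ ^ 2) → ENNReal.ofReal t ≤ transportCost n P := by
    intro P _ t h
    calc ENNReal.ofReal t = ∫⁻ _, ENNReal.ofReal t ∂P := by simp
      _ ≤ _ := lintegral_mono_ae (h.mono fun p hp => ENNReal.ofReal_le_ofReal hp)
  have hupp : ∀ (P : Measure (Euc n × Euc n)) [IsProbabilityMeasure P] (t : ℝ),
      (∀ᵐ p ∂P, ‖p.1 - p.2‖ ^ 2 ≤ t) → transportCost n P ≤ ENNReal.ofReal t := by
    intro P _ t h
    calc transportCost n P ≤ ∫⁻ _, ENNReal.ofReal t ∂P :=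
          lintegral_mono_ae (h.mono fun p hp => ENNReal.ofReal_le_ofReal hp)
      _ = _ := by simp
  have hl₁ := hlow P₁ (‖a - b‖ ^ 2 - g / 4) (hae₁.mono fun p hp => by
    linarith [(abs_lt.1 (H₁ p.1 (ball_subset_ball hs1 hp.1) p.2 (ball_subset_ball hs1 hp.2))).1])
  have hl₂ := hlow P₂ (‖a' - b'‖ ^ 2 - g / 4) (hae₂.mono fun p hp => by
    linarith [(abs_lt.1 (H₂ p.1 (ball_subset_ball hs2 hp.1) p.2 (ball_subset_ball hs2 hp.2))).1])
  have hQae : ∀ (α β : Measure (Euc n)) [IsProbabilityMeasure α] [IsProbabilityMeasure β]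
      (x y : Euc n), (∀ᵐ u ∂α, u ∈ ball x s) → (∀ᵐ u ∂β, u ∈ ball y s) →
      ∀ᵐ p ∂(α.prod β), p.1 ∈ ball x s ∧ p.2 ∈ ball y s := by
    intro α β _ _ x y hα hβ
    exact (Measure.quasiMeasurePreserving_fst.ae hα).and (Measure.quasiMeasurePreserving_snd.ae hβ)
  have hu₁ := hupp Q₁ (‖a - b'‖ ^ 2 + g / 4) (by
    refine (hQae _ _ a b' ?_ ?_).mono fun p hp => ?_
    · exact (ae_map_iff hf.aemeasurable measurableSet_ball).2 (hae₁.mono fun p hp => hp.1)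
    · exact (ae_map_iff hsn.aemeasurable measurableSet_ball).2 (hae₂.mono fun p hp => hp.2)
    · linarith [(abs_lt.1 (H₃ p.1 (ball_subset_ball hs3 hp.1) p.2
        (ball_subset_ball hs3 hp.2))).2])
  have hu₂ := hupp Q₂ (‖a' - b‖ ^ 2 + g / 4) (by
    refine (hQae _ _ a' b ?_ ?_).mono fun p hp => ?_
    · exact (ae_map_iff hf.aemeasurable measurableSet_ball).2 (hae₂.mono fun p hp => hp.1)
    · exact (ae_map_iff hsn.aemeasurable measurableSet_ball).2 (hae₁.mono fun p hp => hp.2)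
    · linarith [(abs_lt.1 (H₄ p.1 (ball_subset_ball hs4 hp.1) p.2
        (ball_subset_ball hs4 hp.2))).2])
  have hfinal := (add_le_add hl₁ hl₂).trans (hcost.trans (add_le_add hu₁ hu₂))
  have h2 := ENNReal.ofReal_add_le.trans hfinal
  rw [← ENNReal.ofReal_add (p := ‖a - b'‖ ^ 2 + g / 4) (by positivity) (by positivity),
    ENNReal.ofReal_le_ofReal_iff (by positivity)] at h2
  linarith

/-! ### The support of the coupling and the outer map -/

theorem SymmetricallySuitable.exists_real {n : ℕ} {μ ν : Measure (Euc n)}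
    (h : SymmetricallySuitable n μ ν) : ∃ ε : ℝ, 0 < ε ∧
      (∀ s, μ s ≤ ENNReal.ofReal ε⁻¹ * sphereMeasure n s) ∧
      (∀ s, ν s ≤ ENNReal.ofReal ε⁻¹ * sphereMeasure n s) ∧
      ∀ s, ENNReal.ofReal ε * sphereMeasure n s ≤ ν s := by
  obtain ⟨_, _, ε, hε0, hεtop, _, hμ, hν', hν⟩ := h
  have hε : 0 < ε.toReal := ENNReal.toReal_pos hε0.ne' hεtop
  refine ⟨ε.toReal, hε, fun s => ?_, fun s => ?_, fun s => ?_⟩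
  · rw [ENNReal.ofReal_inv_of_pos hε, ENNReal.ofReal_toReal hεtop]; exact hμ s
  · rw [ENNReal.ofReal_inv_of_pos hε, ENNReal.ofReal_toReal hεtop]; exact hν s
  · rw [ENNReal.ofReal_toReal hεtop]; exact hν' s

theorem ae_mem_unitSphere_of_le {n : ℕ} {μ : Measure (Euc n)} {c : ℝ≥0∞}
    (h : ∀ s, μ s ≤ c * sphereMeasure n s) : ∀ᵐ x ∂μ, x ∈ unitSphere n := by
  refine measure_mono_null (t := (unitSphere n)ᶜ) (fun x hx => hx) (le_antisymm ?_ bot_le)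
  refine (h _).trans ?_
  rw [sphereMeasure, Measure.restrict_apply' (by exact isClosed_sphere.measurableSet)]
  simp

/-- The measure `σ` charges every neighbourhood of every point of the sphere. -/
theorem sphereMeasure_pos_of_mem_nhds {n : ℕ} {e : Euc n} (he : e ∈ unitSphere n)
    {O : Set (Euc n)} (hO : O ∈ nhds e) : 0 < sphereMeasure n O := by
  have he1 : ‖e‖ = 1 := mem_sphere_zero_iff_norm.1 he
  obtain ⟨b, hb⟩ := exists_basis_zero n he1
  obtain ⟨s, hs, hsO⟩ := Metric.mem_nhds_iff.1 hO
  obtain ⟨l, hl0, hl1, hls⟩ : ∃ l : ℝ, 0 < l ∧ n * l ^ 2 < 1 ∧ 2 * (n * l ^ 2) < s ^ 2 := by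
    have hc : Filter.Tendsto (fun l : ℝ => n * l ^ 2) (nhdsWithin 0 (Ioi 0)) (nhds 0) := by
      have : Continuous fun l : ℝ => n * l ^ 2 := by fun_prop
      simpa using (this.tendsto 0).mono_left nhdsWithin_le_nhds
    have h1 := hc.eventually (gt_mem_nhds (show (0 : ℝ) < 1 by norm_num))
    have h2 := hc.eventually (gt_mem_nhds (show (0 : ℝ) < s ^ 2 / 2 by positivity))
    obtain ⟨l, ⟨h1, h2⟩, h3⟩ := ((h1.and h2).and self_mem_nhdsWithin).exists
    exact ⟨l, h3, h1, by linarith⟩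
  have hsum : ∀ u : Fin n → ℝ, (∀ i, u i ∈ Icc (-l) l) → ∑ i, u i ^ 2 ≤ n * l ^ 2 := by
    intro u hu
    calc ∑ i, u i ^ 2 ≤ ∑ _i : Fin n, l ^ 2 :=
          Finset.sum_le_sum fun i _ => sq_le_sq' (hu i).1 (hu i).2
      _ = n * l ^ 2 := by simp
  have hle := volume_box_le_sphereMeasure b (fun _ => -l) (fun _ => l)
    fun u hu => (hsum u hu).trans_lt hl1
  have hpos : 0 < ∏ _i : Fin n, ENNReal.ofReal (l - -l) := by
    refine pos_iff_ne_zero.2 (Finset.prod_ne_zero_iff.2 fun i _ => ?_)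
    exact (ENNReal.ofReal_pos.2 (by linarith)).ne'
  refine (hpos.trans_le hle).trans_le ?_
  rw [sphereMeasure, Measure.restrict_apply' (by exact isClosed_sphere.measurableSet),
    Measure.restrict_apply' (by exact isClosed_sphere.measurableSet)]
  refine measure_mono ?_
  rintro y ⟨⟨hy0, hy⟩, hyS⟩
  refine ⟨hsO ?_, hyS⟩
  have hy1 : ‖y‖ = 1 := mem_sphere_zero_iff_norm.1 hyS
  have h1 := norm_sq_eq_coords b y
  have h2 := hsum _ hy
  have h3 : ‖y - b 0‖ ^ 2 = 2 - 2 * ⟪y, b 0⟫ := by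
    rw [norm_sub_sq_real, hy1, b.norm_eq_one]; ring
  have h4 : ⟪y, b 0⟫ ≤ 1 := by
    have := real_inner_le_norm y (b 0)
    rwa [hy1, b.norm_eq_one, mul_one] at this
  rw [hy1] at h1
  have h5 : ‖y - b 0‖ ^ 2 < s ^ 2 := by nlinarith
  rw [mem_ball, dist_eq_norm, ← hb]
  exact (sq_lt_sq₀ (norm_nonneg _) hs.le).1 h5

theorem transportCost_ne_top {n : ℕ} {γ : Measure (Euc n × Euc n)} [IsProbabilityMeasure γ]
    (h : ∀ᵐ p ∂γ, p.1 ∈ unitSphere n ∧ p.2 ∈ unitSphere n) : transportCost n γ ≠ ⊤ := by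
  refine ne_top_of_le_ne_top (ENNReal.ofReal_ne_top (r := 4)) ?_
  calc transportCost n γ ≤ ∫⁻ _, ENNReal.ofReal 4 ∂γ := by
        refine lintegral_mono_ae (h.mono fun p hp => ENNReal.ofReal_le_ofReal ?_)
        have h1 : ‖p.1‖ = 1 := mem_sphere_zero_iff_norm.1 hp.1
        have h2 : ‖p.2‖ = 1 := mem_sphere_zero_iff_norm.1 hp.2
        have h3 := norm_sub_le p.1 p.2
        rw [h1, h2] at h3
        nlinarith [norm_nonneg (p.1 - p.2)]
    _ = ENNReal.ofReal 4 := by simp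

theorem support_subset_graphs {n : ℕ} {γ : Measure (Euc n × Euc n)} {tp tm : Euc n → Euc n}
    (hGM : GangboMcCannMaps n γ tp tm) (h : ∀ᵐ p ∂γ, p.1 ∈ unitSphere n) :
    γ.support ⊆ (fun x => (x, tp x)) '' unitSphere n ∪ (fun x => (x, tm x)) '' unitSphere n := by
  obtain ⟨hcp, _, hcm, _, hconc, _⟩ := hGM
  have hS : IsCompact (unitSphere n) := isCompact_sphere _ _
  refine Measure.support_subset_of_isClosed (IsClosed.union
    (hS.image_of_continuousOn (continuousOn_id.prodMk hcp)).isClosed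
    (hS.image_of_continuousOn (continuousOn_id.prodMk hcm)).isClosed) ?_
  have h2 : ∀ᵐ p ∂γ, ¬ (p.2 ≠ tp p.1 ∧ p.2 ≠ tm p.1) := by
    rw [ae_iff]; simpa using hconc
  filter_upwards [h, h2] with p hp hp2
  rw [not_and_or, not_not, not_not] at hp2
  rcases hp2 with hp2 | hp2
  · exact Or.inl ⟨p.1, hp, Prod.ext rfl hp2.symm⟩
  · exact Or.inr ⟨p.1, hp, Prod.ext rfl hp2.symm⟩

/-- Every point of the support of the second marginal lies below a point of the support, by
compactness. -/
theorem exists_mem_support_snd {n : ℕ} {γ : Measure (Euc n × Euc n)} {y : Euc n}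
    (hK : IsCompact γ.support) (hy : ∀ O ∈ nhds y, 0 < γ.map Prod.snd O) :
    ∃ z, (z, y) ∈ γ.support := by
  by_contra hcon
  push Not at hcon
  have hcl : IsClosed (Prod.snd '' γ.support) := (hK.image continuous_snd).isClosed
  have hmem : (Prod.snd '' γ.support)ᶜ ∈ nhds y := by
    refine hcl.isOpen_compl.mem_nhds ?_
    rintro ⟨⟨z, w⟩, hzw, rfl⟩
    exact hcon z hzw
  have h1 := hy _ hmem
  rw [Measure.map_apply measurable_snd hcl.isOpen_compl.measurableSet] at h1
  refine h1.ne' (measure_mono_null (t := γ.supportᶜ) ?_ Measure.measure_compl_support)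
  intro p hp hps
  exact hp ⟨p, hps, rfl⟩

/-- If `t⁺ x` is not a bivalent target, then `(x, t⁺ x)` lies in the support of `γ`: some `(z, t⁺ x)`
does, it lies on one of the two graphs, and injectivity of `t⁺` forces `z = x`. -/
theorem mem_support_of_notMem_T2 {n : ℕ} {γ : Measure (Euc n × Euc n)} {tp tm : Euc n → Euc n}
    (hGM : GangboMcCannMaps n γ tp tm) (h : ∀ᵐ p ∂γ, p.1 ∈ unitSphere n)
    (hpos : ∀ y ∈ unitSphere n, ∀ O ∈ nhds y, 0 < γ.map Prod.snd O)
    {x : Euc n} (hx : x ∈ unitSphere n)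
    (hx2 : tp x ∉ tm '' {x ∈ unitSphere n | tp x ≠ tm x}) : (x, tp x) ∈ γ.support := by
  have hsub := support_subset_graphs hGM h
  obtain ⟨hcp, hbij, hcm, -⟩ := hGM
  have hS : IsCompact (unitSphere n) := isCompact_sphere _ _
  have hK : IsCompact γ.support := IsCompact.of_isClosed_subset (IsCompact.union
    (hS.image_of_continuousOn (continuousOn_id.prodMk hcp))
    (hS.image_of_continuousOn (continuousOn_id.prodMk hcm))) Measure.isClosed_support hsub
  obtain ⟨z, hz⟩ := exists_mem_support_snd hK (hpos (tp x) (hbij.mapsTo hx))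
  have key : ∀ w ∈ unitSphere n, tp w = tp x → w = z → (x, tp x) ∈ γ.support := by
    intro w hw hwx hwz
    have : w = x := hbij.injOn hw hx hwx
    rwa [← hwz, this] at hz
  rcases hsub hz with ⟨w, hw, hwz⟩ | ⟨w, hw, hwz⟩
  · obtain ⟨h1, h2⟩ := Prod.mk.inj hwz
    exact key w hw h2 h1
  · obtain ⟨h1, h2⟩ := Prod.mk.inj hwz
    by_cases hne : tp w = tm w
    · exact key w hw (hne.trans h2) h1
    · exact (hx2 ⟨w, ⟨hw, hne⟩, h2⟩).elim

/-! ### The thickened chord -/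

/-- Points of a box adapted to the projected chord `[y₀, y₁]`, with `b 0` the direction of projection
and `b 1` the direction of the projected chord, are projections of points in the middle half of the
chord, up to an error `ξ`. -/
theorem box_decomposition {m : ℕ}
    (b : OrthonormalBasis (Fin (m + 1 + 1)) ℝ (Euc (m + 1))) {y₀ y₁ : Euc (m + 1)}
    {L t w : ℝ} (hL : 0 < L) (hy : y₁ = y₀ + L • b (Fin.succ 0) + t • b 0)
    (u : Fin (m + 1) → ℝ)
    (h0 : u 0 ∈ Icc (⟪y₀, b (Fin.succ 0)⟫ + L / 4) (⟪y₀, b (Fin.succ 0)⟫ + 3 * L / 4))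
    (hu : ∀ i : Fin m, u i.succ ∈ Icc (⟪y₀, b i.succ.succ⟫ - w) (⟪y₀, b i.succ.succ⟫ + w)) :
    ∃ (θ : ℝ) (ξ : Euc (m + 1)), 1 / 4 ≤ θ ∧ θ ≤ 3 / 4 ∧ ⟪ξ, b 0⟫ = 0 ∧ ‖ξ‖ ≤ m * w ∧
      ∑ i, u i • b i.succ = ((1 - θ) • y₀ + θ • y₁)
        - ⟪(1 - θ) • y₀ + θ • y₁, b 0⟫ • b 0 + ξ := by
  set θ := (u 0 - ⟪y₀, b (Fin.succ 0)⟫) / L with hθ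
  have hθL : θ * L = u 0 - ⟪y₀, b (Fin.succ 0)⟫ := div_mul_cancel₀ _ hL.ne'
  refine ⟨θ, ∑ i : Fin m, (u i.succ - ⟪y₀, b i.succ.succ⟫) • b i.succ.succ, ?_, ?_, ?_, ?_, ?_⟩
  · rw [hθ, le_div_iff₀ hL]; linarith [h0.1]
  · rw [hθ, div_le_iff₀ hL]; linarith [h0.2]
  · simp [sum_inner, real_inner_smul_left, b.inner_eq_ite, Fin.succ_ne_zero]
  · calc _ ≤ ∑ i : Fin m, ‖(u i.succ - ⟪y₀, b i.succ.succ⟫) • b i.succ.succ‖ := norm_sum_le _ _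
      _ ≤ ∑ _i : Fin m, w := by
          refine Finset.sum_le_sum fun i _ => ?_
          rw [norm_smul, b.norm_eq_one, mul_one, Real.norm_eq_abs, abs_le]
          exact ⟨by linarith [(hu i).1], by linarith [(hu i).2]⟩
      _ = m * w := by simp
  · have hY : (1 - θ) • y₀ + θ • y₁ = y₀ + (θ * L) • b (Fin.succ 0) + (θ * t) • b 0 := by
      rw [hy]; module
    have h1 : ⟪b (Fin.succ 0), b 0⟫ = 0 := by simp [b.inner_eq_ite]
    have hYe : ⟪(1 - θ) • y₀ + θ • y₁, b 0⟫ = ⟪y₀, b 0⟫ + θ * t := by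
      rw [hY, inner_add_left, inner_add_left, real_inner_smul_left, real_inner_smul_left, h1,
        real_inner_self_eq_norm_sq, b.norm_eq_one]
      ring
    have hy0 := eq_of_coords b y₀
    rw [Fin.sum_univ_succ] at hy0
    rw [hYe, hY, hθL, Fin.sum_univ_succ]
    simp only [sub_smul, Finset.sum_sub_distrib]
    set A := ∑ i : Fin m, ⟪y₀, b i.succ.succ⟫ • b i.succ.succ
    have : A = y₀ - ⟪y₀, b 0⟫ • b 0 - ⟪y₀, b (Fin.succ 0)⟫ • b (Fin.succ 0) := by
      rw [eq_sub_iff_add_eq, eq_sub_iff_add_eq]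
      conv_rhs => rw [hy0]
      abel
    rw [this]
    module

/-- The projection to `eᗮ` of the thickened middle half of a chord stays in the open unit disc. -/
theorem norm_sq_chord_add_lt_one {E : Type*} [NormedAddCommGroup E] [InnerProductSpace ℝ E]
    {e y₀ y₁ ξ : E} {θ : ℝ} (he : ‖e‖ = 1) (hy₀ : ‖y₀‖ = 1) (hy₁ : ‖y₁‖ = 1)
    (hθ : 1 / 4 ≤ θ) (hθ' : θ ≤ 3 / 4) (hδ : 0 < ‖y₀ - y₁‖)
    (hξ : ‖ξ‖ ≤ ‖y₀ - y₁‖ ^ 2 / 128) :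
    ‖((1 - θ) • y₀ + θ • y₁) - ⟪(1 - θ) • y₀ + θ • y₁, e⟫ • e + ξ‖ ^ 2 < 1 := by
  set Y := (1 - θ) • y₀ + θ • y₁ with hYdef
  set v := Y - ⟪Y, e⟫ • e with hv
  have hδ2 : ‖y₀ - y₁‖ ≤ 2 := by
    have := norm_sub_le y₀ y₁
    rw [hy₀, hy₁] at this; linarith
  have hY : ‖Y‖ ^ 2 = 1 - θ * (1 - θ) * ‖y₀ - y₁‖ ^ 2 := by
    rw [hYdef, norm_add_sq_real, norm_sub_sq_real, norm_smul, norm_smul, mul_pow, mul_pow,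
      real_inner_smul_left, real_inner_smul_right, hy₀, hy₁, Real.norm_eq_abs, Real.norm_eq_abs,
      sq_abs, sq_abs]
    ring
  have hvn : ‖v‖ ^ 2 = ‖Y‖ ^ 2 - ⟪Y, e⟫ ^ 2 := by
    rw [hv, norm_sub_sq_real, norm_smul, real_inner_smul_right, he, Real.norm_eq_abs, mul_one,
      sq_abs]
    ring
  have hθθ : 3 / 16 ≤ θ * (1 - θ) := by nlinarith only [hθ, hθ']
  have hD : 0 < ‖y₀ - y₁‖ ^ 2 := by positivity
  have hD4 : ‖y₀ - y₁‖ ^ 2 ≤ 4 := by nlinarith only [hδ2, hδ]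
  have hv2 : ‖v‖ ^ 2 ≤ 1 - 3 / 16 * ‖y₀ - y₁‖ ^ 2 := by
    nlinarith only [hvn, hY, hθθ, hD, sq_nonneg ⟪Y, e⟫]
  have hv1 : ‖v‖ ≤ 1 := by
    refine (sq_le_one_iff₀ (norm_nonneg _)).1 (by linarith)
  have h1 := norm_add_le v ξ
  have h2 : ‖v + ξ‖ ^ 2 ≤ (‖v‖ + ‖ξ‖) ^ 2 := pow_le_pow_left₀ (norm_nonneg _) h1 2
  have h3 : (‖v‖ + ‖ξ‖) ^ 2 ≤ ‖v‖ ^ 2 + 3 * ‖ξ‖ := by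
    have h4 : ‖ξ‖ ≤ 1 := by linarith
    nlinarith only [mul_nonneg (norm_nonneg ξ) (sub_nonneg.2 hv1),
      mul_nonneg (norm_nonneg ξ) (sub_nonneg.2 h4)]
  linarith

/-- Projecting a chord along `e` does not shorten it by more than a factor `κ / 2` when both ends
have height at least `κ`. As `y₁ - y₀` is orthogonal to `y₁ + y₀`, whose height is at least `2 κ`,
the height difference of the ends is at most `κ⁻¹` times the length of the projected chord. -/
theorem half_mul_le_norm_proj {E : Type*} [NormedAddCommGroup E] [InnerProductSpace ℝ E]
    {e y₀ y₁ : E} {κ : ℝ} (he : ‖e‖ = 1) (hy₀ : ‖y₀‖ = 1) (hy₁ : ‖y₁‖ = 1) (hκ : 0 < κ)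
    (h₀ : κ ≤ ⟪y₀, e⟫) (h₁ : κ ≤ ⟪y₁, e⟫) :
    κ * ‖y₀ - y₁‖ / 2 ≤ ‖(y₁ - y₀) - ⟪y₁ - y₀, e⟫ • e‖ := by
  set t := ⟪y₁ - y₀, e⟫ with ht
  set q := (y₁ - y₀) - t • e with hq
  have hκ1 : κ ≤ 1 := by
    have := real_inner_le_norm y₀ e
    rw [hy₀, he] at this; linarith
  have hsum : ⟪q, y₁ + y₀⟫ + t * ⟪e, y₁ + y₀⟫ = 0 := by
    rw [← real_inner_smul_left, ← inner_add_left, hq, sub_add_cancel, inner_add_right,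
      inner_sub_left, inner_sub_left, real_inner_self_eq_norm_sq, real_inner_self_eq_norm_sq,
      hy₀, hy₁, real_inner_comm y₀ y₁]
    ring
  have hge : 2 * κ ≤ ⟪e, y₁ + y₀⟫ := by
    rw [inner_add_right, real_inner_comm, real_inner_comm y₀ e]
    linarith
  have hqy : |⟪q, y₁ + y₀⟫| ≤ ‖q‖ * 2 := by
    refine (abs_real_inner_le_norm _ _).trans ?_
    refine mul_le_mul_of_nonneg_left ?_ (norm_nonneg _)
    have := norm_add_le y₁ y₀
    rw [hy₀, hy₁] at this; linarith
  -- Solving `⟪q, y₁ + y₀⟫ + t * ⟪e, y₁ + y₀⟫ = 0` for `t`.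
  have htq : κ * |t| ≤ ‖q‖ := by
    have h1 : |t| * ⟪e, y₁ + y₀⟫ = |⟪q, y₁ + y₀⟫| := by
      rw [← abs_of_nonneg (show 0 ≤ ⟪e, y₁ + y₀⟫ by linarith), ← abs_mul,
        eq_neg_of_add_eq_zero_left hsum, abs_neg]
    have := mul_le_mul_of_nonneg_left hge (abs_nonneg t)
    linarith
  have hd : ‖y₀ - y₁‖ ≤ ‖q‖ + |t| := by
    rw [norm_sub_rev]
    have : y₁ - y₀ = q + t • e := by rw [hq]; abel
    rw [this]
    refine (norm_add_le _ _).trans ?_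
    rw [norm_smul, he, mul_one, Real.norm_eq_abs]
  have := mul_le_mul_of_nonneg_left hd hκ.le
  have := mul_le_mul_of_nonneg_right hκ1 (norm_nonneg q)
  linarith

/-- The set of points of the sphere above the thickened middle half of the chord `[y₀, y₁]`, with a
lower bound for its measure: the projection is a box with one side of length at least
`κ ‖y₀ - y₁‖ / 4` and the `m` others of length `2 w`. -/
theorem exists_thick_chord {m : ℕ} {e y₀ y₁ : Euc (m + 1)} {κ w : ℝ}
    (he : ‖e‖ = 1) (hy₀ : ‖y₀‖ = 1) (hy₁ : ‖y₁‖ = 1) (hκ : 0 < κ)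
    (h₀ : κ ≤ ⟪y₀, e⟫) (h₁ : κ ≤ ⟪y₁, e⟫) (hδ : 0 < ‖y₀ - y₁‖) (hw : 0 ≤ w)
    (hwδ : m * w ≤ ‖y₀ - y₁‖ ^ 2 / 128) :
    ∃ N : Set (Euc (m + 1)), MeasurableSet N ∧
      ENNReal.ofReal (κ * ‖y₀ - y₁‖ / 4 * (2 * w) ^ m) ≤ sphereMeasure (m + 1) N ∧
      ∀ y ∈ N, 0 < ⟪y, e⟫ ∧ ∃ (θ τ : ℝ) (ξ : Euc (m + 1)), 1 / 4 ≤ θ ∧ θ ≤ 3 / 4 ∧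
        ⟪ξ, e⟫ = 0 ∧ ‖ξ‖ ≤ m * w ∧ y = (1 - θ) • y₀ + θ • y₁ + ξ + τ • e := by
  set t := ⟪y₁ - y₀, e⟫ with ht
  set q := (y₁ - y₀) - t • e with hq
  have hqe : ⟪e, q⟫ = 0 := by
    rw [hq, inner_sub_right, real_inner_smul_right, real_inner_self_eq_norm_sq, he,
      real_inner_comm, ← ht]
    ring
  have hLκ : κ * ‖y₀ - y₁‖ / 2 ≤ ‖q‖ := half_mul_le_norm_proj he hy₀ hy₁ hκ h₀ h₁
  have hL : 0 < ‖q‖ := lt_of_lt_of_le (by positivity) hLκ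
  obtain ⟨b, hb0, hb1⟩ := exists_basis_zero_one m (e := e) (q := ‖q‖⁻¹ • q) he
    (by rw [norm_smul, norm_inv, norm_norm, inv_mul_cancel₀ hL.ne'])
    (by rw [real_inner_smul_right, hqe, mul_zero])
  have hy : y₁ = y₀ + ‖q‖ • b (Fin.succ 0) + t • b 0 := by
    rw [hb1, hb0, smul_smul, mul_inv_cancel₀ hL.ne', one_smul, hq]; abel
  let lo : Fin (m + 1) → ℝ := Fin.cons (⟪y₀, b (Fin.succ 0)⟫ + ‖q‖ / 4)
    fun i : Fin m => ⟪y₀, b i.succ.succ⟫ - w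
  let hi : Fin (m + 1) → ℝ := Fin.cons (⟪y₀, b (Fin.succ 0)⟫ + 3 * ‖q‖ / 4)
    fun i : Fin m => ⟪y₀, b i.succ.succ⟫ + w
  have hdec : ∀ u : Fin (m + 1) → ℝ, (∀ i, u i ∈ Icc (lo i) (hi i)) →
      ∃ (θ : ℝ) (ξ : Euc (m + 1)), 1 / 4 ≤ θ ∧ θ ≤ 3 / 4 ∧ ⟪ξ, b 0⟫ = 0 ∧ ‖ξ‖ ≤ m * w ∧
      ∑ i, u i • b i.succ = ((1 - θ) • y₀ + θ • y₁)
        - ⟪(1 - θ) • y₀ + θ • y₁, b 0⟫ • b 0 + ξ := fun u hu =>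
    box_decomposition b hL hy u (by simpa [lo, hi] using hu 0)
      fun i => by simpa [lo, hi] using hu i.succ
  refine ⟨{y | 0 < ⟪y, b 0⟫ ∧ ∀ i : Fin (m + 1), ⟪y, b i.succ⟫ ∈ Icc (lo i) (hi i)}, ?_, ?_, ?_⟩
  · have h1 : Measurable fun y : Euc (m + 1) => ⟪y, b 0⟫ :=
      (continuous_id.inner continuous_const).measurable
    have h2 : ∀ i : Fin (m + 1), Measurable fun y : Euc (m + 1) => ⟪y, b i.succ⟫ := fun i =>
      (continuous_id.inner continuous_const).measurable
    have h3 : {y : Euc (m + 1) | 0 < ⟪y, b 0⟫ ∧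
          ∀ i : Fin (m + 1), ⟪y, b i.succ⟫ ∈ Icc (lo i) (hi i)} =
        {y | 0 < ⟪y, b 0⟫} ∩ ⋂ i : Fin (m + 1), (fun y => ⟪y, b i.succ⟫) ⁻¹' Icc (lo i) (hi i) := by
      ext y
      simp only [mem_ofPred_eq, mem_inter_iff, mem_iInter, mem_preimage]
    rw [h3]
    exact (measurableSet_lt measurable_const h1).inter
      (MeasurableSet.iInter fun i => h2 i measurableSet_Icc)
  · refine le_trans ?_ (volume_box_le_sphereMeasure b lo hi fun u hu => ?_)
    · rw [Fin.prod_univ_succ]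
      simp only [lo, hi, Fin.cons_zero, Fin.cons_succ, add_sub_sub_cancel,
        add_sub_add_left_eq_sub, Finset.prod_const, Finset.card_univ, Fintype.card_fin]
      rw [← ENNReal.ofReal_pow (by linarith), ← ENNReal.ofReal_mul (by linarith)]
      refine ENNReal.ofReal_le_ofReal ?_
      rw [two_mul]
      exact mul_le_mul_of_nonneg_right (by linarith) (by positivity)
    · obtain ⟨θ, ξ, hθ, hθ', -, hξ, heq⟩ := hdec u hu
      have h1 := norm_sq_eq_coords b ((0 : ℝ) • b 0 + ∑ i, u i • b i.succ)
      simp only [inner_comb_zero, inner_comb_succ] at h1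
      rw [zero_smul, zero_add, heq, hb0] at h1
      have h2 := norm_sq_chord_add_lt_one (ξ := ξ) he hy₀ hy₁ hθ hθ' hδ (hξ.trans hwδ)
      linarith
  · rintro y ⟨hy0, hyb⟩
    obtain ⟨θ, ξ, hθ, hθ', hξ0, hξ, heq⟩ := hdec _ hyb
    rw [hb0] at hy0 hξ0
    refine ⟨hy0, θ, ⟪y, e⟫ - ⟪(1 - θ) • y₀ + θ • y₁, e⟫, ξ, hθ, hθ', hξ0, hξ, ?_⟩
    have h1 := eq_of_coords b y
    rw [heq, hb0] at h1
    conv_lhs => rw [h1]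
    module

/-! ### The Hölder estimate -/

/-- If `γ` only transports into `N` from `B`, then `N` has at most the mass of `B`. -/
theorem measure_le_of_support {n : ℕ} {μ ν : Measure (Euc n)} {γ : Measure (Euc n × Euc n)}
    (hc : IsCoupling n μ ν γ) {N B : Set (Euc n)} (hN : MeasurableSet N) (hB : MeasurableSet B)
    (h : ∀ z y, (z, y) ∈ γ.support → y ∈ N → z ∈ B) : ν N ≤ μ B := by
  obtain ⟨_, h1, h2⟩ := hc
  rw [← h1, ← h2, Measure.map_apply measurable_snd hN, Measure.map_apply measurable_fst hB]
  refine measure_mono_ae ?_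
  filter_upwards [Measure.support_mem_ae (μ := γ)] with p hp hpN
  exact h p.1 p.2 hp hpN

/-- The volume comparison gives `δ ^ (2 m + 1) ≤ C r`; since `r ^ 2` is proportional to `d / δ`,
squaring and multiplying by `δ` gives `δ ^ (4 m + 3) ≤ C d`. -/
theorem pow_le_of_volume_le {m : ℕ} {ε κ δ r d K C₂ : ℝ} (hε : 0 < ε) (hκ : 0 < κ) (hδ : 0 < δ)
    (hr : 0 < r) (hK : 0 < K) (hrd : r ^ 2 * κ * δ = 192 * d)
    (hvol : ε * (κ * δ / 4 * (K * r * δ ^ 2) ^ m) ≤ ε⁻¹ * (C₂ * r ^ (m + 1))) :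
    δ ^ (4 * m + 3) ≤ (4 * C₂ / (ε ^ 2 * κ * K ^ m)) ^ 2 * (192 / κ) * d := by
  set C₃ := 4 * C₂ / (ε ^ 2 * κ * K ^ m) with hC₃
  have h1 : δ ^ (2 * m + 1) ≤ C₃ * r := by
    rw [hC₃, div_mul_eq_mul_div, le_div_iff₀ (by positivity)]
    have h2 := mul_le_mul_of_nonneg_left hvol hε.le
    rw [← mul_assoc ε ε⁻¹, mul_inv_cancel₀ hε.ne', one_mul] at h2
    have hrm : 0 < r ^ m := by positivity
    refine le_of_mul_le_mul_right ?_ hrm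
    calc δ ^ (2 * m + 1) * (ε ^ 2 * κ * K ^ m) * r ^ m
        = 4 * (ε * (ε * (κ * δ / 4 * (K * r * δ ^ 2) ^ m))) := by
          rw [mul_pow, mul_pow, ← pow_mul]; ring
      _ ≤ 4 * (C₂ * r ^ (m + 1)) := by linarith
      _ = 4 * C₂ * r * r ^ m := by ring
  have h2 : (δ ^ (2 * m + 1)) ^ 2 ≤ (C₃ * r) ^ 2 := pow_le_pow_left₀ (by positivity) h1 2
  have h3 : (192 / κ) * d = r ^ 2 * δ := by
    field_simp; linarith
  calc δ ^ (4 * m + 3) = (δ ^ (2 * m + 1)) ^ 2 * δ := by ring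
    _ ≤ (C₃ * r) ^ 2 * δ := mul_le_mul_of_nonneg_right h2 hδ.le
    _ = C₃ ^ 2 * (192 / κ) * d := by rw [mul_assoc (C₃ ^ 2), h3]; ring

/-- The Hölder estimate for pairs of points of the support of `γ` whose targets have height at
least `κ` over the first source point. -/
theorem exists_pow_norm_le {m : ℕ} {μ ν : Measure (Euc (m + 1))}
    {γ : Measure (Euc (m + 1) × Euc (m + 1))}
    (hsuit : SymmetricallySuitable (m + 1) μ ν) (hc : IsCoupling (m + 1) μ ν γ)
    (hS : ∀ p ∈ γ.support, p.1 ∈ unitSphere (m + 1) ∧ p.2 ∈ unitSphere (m + 1))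
    (hmono : ∀ a b a' b', (a, b) ∈ γ.support → (a', b') ∈ γ.support → 0 ≤ ⟪a - a', b - b'⟫)
    {κ : ℝ} (hκ : 0 < κ) :
    ∃ C : ℝ, 0 ≤ C ∧ ∀ e x y₀ y₁, (e, y₀) ∈ γ.support → (x, y₁) ∈ γ.support →
      κ ≤ ⟪y₀, e⟫ → κ ≤ ⟪y₁, e⟫ → e ≠ x → ‖y₀ - y₁‖ ^ (4 * m + 3) ≤ C * ‖x - e‖ := by
  obtain ⟨ε, hε, hμ, -, hν⟩ := hsuit.exists_real
  obtain ⟨C₂, hC₂, hball⟩ := exists_sphereMeasure_closedBall_le (m + 1)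
  set K : ℝ := 1 / (64 * (m + 1)) with hKdef
  have hK : 0 < K := by positivity
  set C₄ := (4 * C₂ / (ε ^ 2 * κ * K ^ m)) ^ 2 * (192 / κ) with hC₄
  set C₅ := 2 ^ (4 * m + 2) * (192 / κ) with hC₅
  have hC₄0 : 0 ≤ C₄ := by positivity
  have hC₅0 : 0 ≤ C₅ := by positivity
  refine ⟨C₄ + C₅, by positivity, fun e x y₀ y₁ hp₀ hp₁ h₀ h₁ hne => ?_⟩
  have he : ‖e‖ = 1 := mem_sphere_zero_iff_norm.1 (hS _ hp₀).1
  have hy₀ : ‖y₀‖ = 1 := mem_sphere_zero_iff_norm.1 (hS _ hp₀).2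
  have hy₁ : ‖y₁‖ = 1 := mem_sphere_zero_iff_norm.1 (hS _ hp₁).2
  have hd : 0 < ‖x - e‖ := norm_sub_pos_iff.2 hne.symm
  set δ := ‖y₀ - y₁‖ with hδdef
  set d := ‖x - e‖ with hddef
  rcases (norm_nonneg (y₀ - y₁)).eq_or_lt with hδ | hδ
  · rw [← hδdef] at hδ
    rw [← hδ, zero_pow (by omega)]
    positivity
  rw [← hδdef] at hδ
  have hδ2 : δ ≤ 2 := by
    have := norm_sub_le y₀ y₁
    rw [hy₀, hy₁] at this; linarith
  -- The radius for which `contact_point_near` applies with equality in its distance hypothesis.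
  set r := √(192 * d / (κ * δ)) with hr
  have hr0 : 0 < r := Real.sqrt_pos.2 (by positivity)
  have hrd : r ^ 2 * κ * δ = 192 * d := by
    rw [hr, Real.sq_sqrt (by positivity)]; field_simp
  rcases le_or_gt r 1 with hr1 | hr1
  -- With this `w` the total transversal error `m * w` is at most `r * δ ^ 2 / 128`.
  · set w := K * r * δ ^ 2 / 2 with hw
    have hmw : m * w ≤ r * δ ^ 2 / 128 := by
      have hmK : m * K ≤ 1 / 64 := by
        rw [hKdef, mul_one_div, div_le_div_iff₀ (by positivity) (by norm_num)]
        linarith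
      have := mul_le_mul_of_nonneg_right hmK (show 0 ≤ r * δ ^ 2 by positivity)
      rw [hw]; linarith
    have hmw' : m * w ≤ δ ^ 2 / 128 := by
      have := mul_le_mul_of_nonneg_right hr1 (show 0 ≤ δ ^ 2 by positivity)
      linarith
    obtain ⟨N, hNm, hNv, hN⟩ := exists_thick_chord he hy₀ hy₁ hκ h₀ h₁ hδ
      (show 0 ≤ w by positivity) hmw'
    have hle : ν N ≤ μ (closedBall e r) := by
      refine measure_le_of_support hc hNm measurableSet_closedBall fun z y hzy hyN => ?_
      obtain ⟨hye, θ, τ, ξ, hθ, hθ', hξe, hξ, hyξ⟩ := hN y hyN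
      rw [mem_closedBall, dist_eq_norm]
      exact contact_point_near he hy₀ hy₁ (mem_sphere_zero_iff_norm.1 (hS _ hzy).1)
        (mem_sphere_zero_iff_norm.1 (hS _ hzy).2) hκ h₀ h₁ hye hθ hθ' hξe hyξ hδ hr0.le hr1
        (hξ.trans hmw) hrd.ge (hmono _ _ _ _ hzy hp₀) (hmono _ _ _ _ hzy hp₁)
    have hvol : ε * (κ * δ / 4 * (K * r * δ ^ 2) ^ m) ≤ ε⁻¹ * (C₂ * r ^ (m + 1)) := by
      have h2w : 2 * w = K * r * δ ^ 2 := by rw [hw]; ring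
      rw [← h2w]
      refine (ENNReal.ofReal_le_ofReal_iff (by positivity)).1 ?_
      rw [ENNReal.ofReal_mul hε.le, ENNReal.ofReal_mul (inv_pos.2 hε).le]
      calc _ ≤ ENNReal.ofReal ε * sphereMeasure (m + 1) N := by gcongr
        _ ≤ ν N := hν N
        _ ≤ μ (closedBall e r) := hle
        _ ≤ ENNReal.ofReal ε⁻¹ * sphereMeasure (m + 1) (closedBall e r) := hμ _
        _ ≤ _ := by gcongr; exact hball e (hS _ hp₀).1 r hr0.le hr1
    have := pow_le_of_volume_le hε hκ hδ hr0 hK hrd hvol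
    rw [← hC₄] at this
    have := mul_nonneg hC₅0 hd.le
    linarith
  -- For `r > 1` the estimate is linear, and `δ ≤ 2` absorbs the remaining powers.
  · have h1 : κ * δ ≤ 192 * d := by
      rw [← hrd, mul_assoc]
      exact le_mul_of_one_le_left (by positivity) (one_le_pow₀ hr1.le)
    have h2 : δ ≤ 192 / κ * d := by
      rw [div_mul_eq_mul_div, le_div_iff₀ hκ]; linarith
    have h3 : δ ^ (4 * m + 2) * δ ≤ 2 ^ (4 * m + 2) * (192 / κ * d) := by gcongr
    have h4 : δ ^ (4 * m + 3) = δ ^ (4 * m + 2) * δ := by ring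
    have := mul_nonneg hC₄0 hd.le
    rw [h4, add_mul, hC₅, mul_assoc (2 ^ (4 * m + 2))]
    linarith

/-- With `T₀ := t⁺(S₀)` the degenerate target set and `T₂ := t⁻(S₂)` the
bivalent target set, the outer optimal map `t⁺` is locally Hölder continuous with exponent
`1/(4n−1)` on the set `(t⁺)⁻¹(Sⁿ \ (T₀ ∪ T₂))`. -/
theorem tPlus_locallyHolder_on_preimage_T1 (n : ℕ) (hn : 1 < n)
    (μ ν : Measure (Euc n)) (γ : Measure (Euc n × Euc n))
    (tp tm : Euc n → Euc n)
    (hsuit : SymmetricallySuitable n μ ν)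
    (hopt : IsOptimalCoupling n μ ν γ)
    (hGM : GangboMcCannMaps n γ tp tm) :
    LocallyHolderOn n tp
      {x ∈ unitSphere n |
        tp x ∈ unitSphere n \
          ((tp '' {x ∈ unitSphere n | tp x = tm x ∧ ⟪x, tp x⟫ = 0}) ∪
           (tm '' {x ∈ unitSphere n | tp x ≠ tm x}))}
      (1 / (4 * (n : ℝ) - 1)) := by
  obtain ⟨m, rfl⟩ : ∃ m, n = m + 1 := ⟨n - 1, by omega⟩
  have hc := hopt.1
  obtain ⟨hγ, hγ1, hγ2⟩ := hc
  obtain ⟨ε, hε, hμ, hν', hν⟩ := hsuit.exists_real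
  have hfst : ∀ᵐ p ∂γ, p.1 ∈ unitSphere (m + 1) := by
    have h := ae_mem_unitSphere_of_le hμ
    rw [← hγ1] at h
    exact ae_of_ae_map measurable_fst.aemeasurable h
  have hsnd : ∀ᵐ p ∂γ, p.2 ∈ unitSphere (m + 1) := by
    have h := ae_mem_unitSphere_of_le hν'
    rw [← hγ2] at h
    exact ae_of_ae_map measurable_snd.aemeasurable h
  have hfin := transportCost_ne_top (hfst.and hsnd)
  have hS : ∀ p ∈ γ.support, p.1 ∈ unitSphere (m + 1) ∧ p.2 ∈ unitSphere (m + 1) := by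
    intro p hp
    rcases support_subset_graphs hGM hfst hp with ⟨w, hw, rfl⟩ | ⟨w, hw, rfl⟩
    · exact ⟨hw, hGM.2.1.mapsTo hw⟩
    · exact ⟨hw, hGM.2.2.2.1 hw⟩
  have hpos : ∀ y ∈ unitSphere (m + 1), ∀ O ∈ nhds y, 0 < γ.map Prod.snd O := by
    intro y hy O hO
    rw [hγ2]
    exact (ENNReal.mul_pos (ENNReal.ofReal_pos.2 hε).ne'
      (sphereMeasure_pos_of_mem_nhds hy hO).ne').trans_le (hν O)
  set A := {x ∈ unitSphere (m + 1) | tp x ∈ unitSphere (m + 1) \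
    ((tp '' {x ∈ unitSphere (m + 1) | tp x = tm x ∧ ⟪x, tp x⟫ = 0}) ∪
      (tm '' {x ∈ unitSphere (m + 1) | tp x ≠ tm x}))} with hA
  have hsupp : ∀ x ∈ A, (x, tp x) ∈ γ.support := fun x hx =>
    mem_support_of_notMem_T2 hGM hfst hpos hx.1 fun h => hx.2.2 (Or.inr h)
  intro a ha
  have hapos : 0 < ⟪a, tp a⟫ := by
    by_cases hne : tp a = tm a
    · refine lt_of_le_of_ne (hGM.2.2.2.2.2.1 a ha.1 hne) fun h0 => ?_
      exact ha.2.2 (Or.inl ⟨a, ⟨ha.1, hne, h0.symm⟩, rfl⟩)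
    · exact (hGM.2.2.2.2.2.2 a ha.1 hne).2.1
  set κ := ⟪a, tp a⟫ / 2 with hκdef
  have hκ : 0 < κ := half_pos hapos
  obtain ⟨C, hC, hest⟩ := exists_pow_norm_le hsuit hopt.1 hS
    (fun _ _ _ _ h h' => inner_nonneg_of_mem_support hopt hfin h h') hκ
  have hcont : ContinuousWithinAt tp A a := (hGM.1 a ha.1).mono fun x hx => hx.1
  refine ⟨A ∩ (ball a (κ / 2) ∩ tp ⁻¹' ball (tp a) (κ / 2)), ?_, inter_subset_left,
    C ^ (1 / (4 * ((m + 1 : ℕ) : ℝ) - 1)), ?_⟩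
  · refine Filter.inter_mem self_mem_nhdsWithin (Filter.inter_mem ?_ ?_)
    · exact mem_nhdsWithin_of_mem_nhds (ball_mem_nhds _ (by positivity))
    · exact hcont (ball_mem_nhds _ (by positivity))
  -- On this neighbourhood every `tp x'` has height at least `κ` over every `x`.
  have hheight : ∀ x ∈ A, x ∈ ball a (κ / 2) → ∀ y, y ∈ ball (tp a) (κ / 2) → κ ≤ ⟪y, x⟫ := by
    intro x hx hxa y hya
    rw [mem_ball, dist_eq_norm] at hxa hya
    have hx1 : ‖x‖ = 1 := mem_sphere_zero_iff_norm.1 hx.1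
    have ha1 : ‖tp a‖ = 1 := mem_sphere_zero_iff_norm.1 ha.2.1
    have h1 : ⟪y, x⟫ = ⟪a, tp a⟫ + ⟪y - tp a, x⟫ + ⟪tp a, x - a⟫ := by
      rw [inner_sub_left, inner_sub_right, real_inner_comm a (tp a)]; ring
    have h2 := (abs_le.1 (abs_real_inner_le_norm (y - tp a) x)).1
    have h3 := (abs_le.1 (abs_real_inner_le_norm (tp a) (x - a))).1
    rw [hx1, mul_one] at h2
    rw [ha1, one_mul] at h3
    linarith
  rintro x₀ ⟨hx₀, hx₀a, hx₀t⟩ x₁ ⟨hx₁, hx₁a, hx₁t⟩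
  by_cases hne : x₀ = x₁
  · rw [hne, sub_self, norm_zero]; positivity
  have hmain := hest x₀ x₁ (tp x₀) (tp x₁) (hsupp _ hx₀) (hsupp _ hx₁)
    (hheight _ hx₀ hx₀a _ hx₀t) (hheight _ hx₀ hx₀a _ hx₁t) hne
  have hexp : 1 / (4 * ((m + 1 : ℕ) : ℝ) - 1) = ((4 * m + 3 : ℕ) : ℝ)⁻¹ := by
    rw [one_div]; congr 1; push_cast; ring
  rw [hexp, ← Real.mul_rpow hC (norm_nonneg _), norm_sub_rev,
    ← Real.pow_rpow_inv_natCast (norm_nonneg (tp x₀ - tp x₁)) (show 4 * m + 3 ≠ 0 by omega)]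
  exact Real.rpow_le_rpow (by positivity) hmain (by positivity)
end
end

section
/- Suppose in addition that t⁺ is Hölder continuous on U with exponent α ∈ (0,1] and constant C⁺ ≥ 0, i.e. |t⁺(x₁) − t⁺(x₀)| ≤ C⁺|x₁ − x₀|^α for all x₀, x₁ ∈ U. Then t⁻ is Hölder continuous on U at small scales with the same exponent: for all x₀, x₁ ∈ U with |x₁ − x₀| < δ, one has |t⁻(x₁) − t⁻(x₀)| ≤ (1 + 2/k)(C⁺ + 2)|x₁ − x₀|^α. -/
open scoped RealInnerProductSpace

/-!
Since `t⁺(x)` and `t⁻(x)` are unit vectors whose difference is a nonzero multiple of the unit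
vector `x`, they are mirror images: `t⁻(x) = t⁺(x) - 2 (x · t⁺(x)) x`
(`eq_reflection_of_sub_eq_smul`). The reflected vector depends in a Lipschitz way on both the
unit normal and the vector, with constants `4` and `3` (`norm_reflection_sub_le`). As
`|x₁ - x₀| < 1` gives `|x₁ - x₀| ≤ |x₁ - x₀| ^ α`, this yields
`|t⁻(x₁) - t⁻(x₀)| ≤ (3 C⁺ + 4) |x₁ - x₀| ^ α`, and `3 C⁺ + 4 ≤ (1 + 2 / k) (C⁺ + 2)` because
`k ≤ 1`.
-/

section

variable {E : Type*} [NormedAddCommGroup E] [InnerProductSpace ℝ E]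

/-- Two unit vectors that differ by a nonzero multiple of a unit vector `x` are mirror images in
the hyperplane orthogonal to `x`. -/
lemma eq_reflection_of_sub_eq_smul {x p m : E} (hx : ‖x‖ = 1) (hp : ‖p‖ = 1) (hm : ‖m‖ = 1)
    {l : ℝ} (hl : l ≠ 0) (h : p - m = l • x) : m = p - (2 * ⟪x, p⟫) • x := by
  have hm' : m = p - l • x := by rw [← h]; abel
  have key : ‖m‖ ^ 2 = ‖p‖ ^ 2 - 2 * (l * ⟪x, p⟫) + l ^ 2 := by
    rw [hm', norm_sub_sq_real, inner_smul_right, real_inner_comm, norm_smul, hx, mul_one,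
      Real.norm_eq_abs, sq_abs]
  rw [hp, hm] at key
  have hl2 : l = 2 * ⟪x, p⟫ := mul_left_cancel₀ hl (by linarith)
  rw [← hl2, hm']

lemma norm_reflection_sub_le {x y p q : E} (hx : ‖x‖ = 1) (hy : ‖y‖ = 1) (hq : ‖q‖ = 1) :
    ‖(p - (2 * ⟪x, p⟫) • x) - (q - (2 * ⟪y, q⟫) • y)‖ ≤ 3 * ‖p - q‖ + 4 * ‖x - y‖ := by
  have e : (p - (2 * ⟪x, p⟫) • x) - (q - (2 * ⟪y, q⟫) • y)
      = (p - q) - (2 : ℝ) • (⟪x, p - q⟫ • x + ⟪x - y, q⟫ • x + ⟪y, q⟫ • (x - y)) := by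
    rw [inner_sub_right, inner_sub_left]
    module
  have h1 : ‖⟪x, p - q⟫ • x‖ ≤ ‖p - q‖ := by
    simpa [norm_smul, hx] using abs_real_inner_le_norm x (p - q)
  have h2 : ‖⟪x - y, q⟫ • x‖ ≤ ‖x - y‖ := by
    simpa [norm_smul, hx, hq] using abs_real_inner_le_norm (x - y) q
  have h3 : ‖⟪y, q⟫ • (x - y)‖ ≤ ‖x - y‖ := by
    rw [norm_smul]
    refine mul_le_of_le_one_left (norm_nonneg _) ?_
    simpa [hy, hq] using abs_real_inner_le_norm y q
  have h4 := norm_add₃_le (a := ⟪x, p - q⟫ • x) (b := ⟪x - y, q⟫ • x) (c := ⟪y, q⟫ • (x - y))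
  rw [e]
  refine (norm_sub_le _ _).trans ?_
  rw [norm_smul, Real.norm_ofNat]
  linarith

end

/-- Let `U ⊆ Sⁿ`, `k ∈ (0,1]`, and `t⁺, t⁻ : U → Sⁿ` with
`t⁺(x) − t⁻(x) = λ(x)x`, `λ(x) > 0`, and `x·t⁻(x) ≤ −k` on `U`. Fix `ε ∈ (0, k/2)` and
`δ ∈ (0,1)` such that `|x₁ − x₀| < δ` implies `|t⁻(x₁) − t⁻(x₀)| < ε` on `U`. If `t⁺` is
Hölder on `U` with exponent `α ∈ (0,1]` and constant `C⁺ ≥ 0`, then for all `x₀, x₁ ∈ U`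
with `|x₁ − x₀| < δ`, `|t⁻(x₁) − t⁻(x₀)| ≤ (1 + 2/k)(C⁺ + 2)|x₁ − x₀|^α`. -/
theorem tMinus_holder_of_tPlus_holder (n : ℕ)
    (U : Set (EuclideanSpace ℝ (Fin (n + 1))))
    (hU : U ⊆ Metric.sphere (0 : EuclideanSpace ℝ (Fin (n + 1))) 1)
    (k : ℝ) (hk0 : 0 < k) (hk1 : k ≤ 1)
    (tp tm : EuclideanSpace ℝ (Fin (n + 1)) → EuclideanSpace ℝ (Fin (n + 1)))
    (htp : ∀ x ∈ U, tp x ∈ Metric.sphere (0 : EuclideanSpace ℝ (Fin (n + 1))) 1)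
    (htm : ∀ x ∈ U, tm x ∈ Metric.sphere (0 : EuclideanSpace ℝ (Fin (n + 1))) 1)
    (hsplit : ∀ x ∈ U, ∃ l : ℝ, 0 < l ∧ tp x - tm x = l • x)
    (hdot : ∀ x ∈ U, ⟪x, tm x⟫ ≤ -k)
    (ε δ : ℝ) (hε0 : 0 < ε) (hεk : ε < k / 2) (hδ0 : 0 < δ) (hδ1 : δ < 1)
    (hmod : ∀ x₀ ∈ U, ∀ x₁ ∈ U, ‖x₁ - x₀‖ < δ → ‖tm x₁ - tm x₀‖ < ε)
    (α : ℝ) (hα0 : 0 < α) (hα1 : α ≤ 1)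
    (Cp : ℝ) (hCp : 0 ≤ Cp)
    (hHolder : ∀ x₀ ∈ U, ∀ x₁ ∈ U, ‖tp x₁ - tp x₀‖ ≤ Cp * ‖x₁ - x₀‖ ^ α) :
    ∀ x₀ ∈ U, ∀ x₁ ∈ U, ‖x₁ - x₀‖ < δ →
      ‖tm x₁ - tm x₀‖ ≤ (1 + 2 / k) * (Cp + 2) * ‖x₁ - x₀‖ ^ α := by
  intro x₀ h₀ x₁ h₁ hd
  have unit : ∀ x ∈ U, ‖x‖ = 1 := fun x hx => by simpa using hU hx
  have unitp : ∀ x ∈ U, ‖tp x‖ = 1 := fun x hx => by simpa using htp x hx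
  have refl : ∀ x ∈ U, tm x = tp x - (2 * ⟪x, tp x⟫) • x := fun x hx => by
    obtain ⟨l, hl, h⟩ := hsplit x hx
    exact eq_reflection_of_sub_eq_smul (unit x hx) (unitp x hx) (by simpa using htm x hx) hl.ne' h
  have hlip : ‖tm x₁ - tm x₀‖ ≤ 3 * ‖tp x₁ - tp x₀‖ + 4 * ‖x₁ - x₀‖ := by
    rw [refl x₁ h₁, refl x₀ h₀]
    exact norm_reflection_sub_le (unit x₁ h₁) (unit x₀ h₀) (unitp x₀ h₀)
  have hpow : ‖x₁ - x₀‖ ≤ ‖x₁ - x₀‖ ^ α :=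
    Real.self_le_rpow_of_le_one (norm_nonneg _) (hd.trans hδ1).le hα1
  have hk : 3 ≤ 1 + 2 / k := by
    have : 2 ≤ 2 / k := (le_div_iff₀ hk0).2 (by linarith)
    linarith
  have hr : 0 ≤ ‖x₁ - x₀‖ ^ α := by positivity
  calc ‖tm x₁ - tm x₀‖ ≤ 3 * (Cp + 2) * ‖x₁ - x₀‖ ^ α := by
        linarith [hHolder x₀ h₀ x₁ h₁]
    _ ≤ (1 + 2 / k) * (Cp + 2) * ‖x₁ - x₀‖ ^ α := by gcongr
end

section
/- Suppose t⁻ is Hölder continuous on U with exponent α ∈ (0,1] and constant C⁻ ≥ 0, i.e. |t⁻(x₁) − t⁻(x₀)| ≤ C⁻|x₁ − x₀|^α for all x₀, x₁ ∈ U. Then t⁺ is Hölder continuous on U at small scales with the same exponent: for all x₀, x₁ ∈ U with |x₁ − x₀| < δ, one has |t⁺(x₁) − t⁺(x₀)| ≤ (1 + 2/k)(C⁻ + 2)|x₁ − x₀|^α. -/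
/-!
Since `t⁺(x) = t⁻(x) + λ(x) x` with both vectors of unit length and `λ(x) ≠ 0`, comparing norms
forces `λ(x) = -2 x·t⁻(x)`: `t⁺(x)` is the reflection `R_x t⁻(x) = t⁻(x) - 2 (x·t⁻(x)) x` in the
hyperplane `x^⊥` (`eq_reflection`). Hence
`t⁺(x₁) - t⁺(x₀) = R_{x₁}(t⁻(x₁) - t⁻(x₀)) + (R_{x₁} - R_{x₀}) t⁻(x₀)`,
and the crude bounds `‖R_x v‖ ≤ 3 ‖v‖` and `‖(R_{x₁} - R_{x₀}) m‖ ≤ 4 ‖x₁ - x₀‖` give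
`‖t⁺(x₁) - t⁺(x₀)‖ ≤ 3 ‖t⁻(x₁) - t⁻(x₀)‖ + 4 ‖x₁ - x₀‖` (`norm_reflection_sub_le`). The claim
follows because `k ≤ 1` gives `1 + 2/k ≥ 3`, and `‖x₁ - x₀‖ ≤ ‖x₁ - x₀‖ ^ α` when
`‖x₁ - x₀‖ < 1`.
-/

open scoped RealInnerProductSpace

section Reflection

variable {E : Type*} [NormedAddCommGroup E] [InnerProductSpace ℝ E]

/-- Two distinct unit vectors that differ by a multiple of the unit vector `x` are mirror images
of each other in the hyperplane orthogonal to `x`. -/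
lemma eq_reflection {x p m : E} {l : ℝ} (hx : ‖x‖ = 1) (hp : ‖p‖ = 1) (hm : ‖m‖ = 1)
    (hl : 0 < l) (h : p - m = l • x) : p = m - (2 * ⟪x, m⟫) • x := by
  have hp' : p = m + l • x := by rw [← h]; abel
  have hsq : ‖p‖ ^ 2 = ‖m‖ ^ 2 + 2 * (l * ⟪x, m⟫) + l ^ 2 := by
    rw [hp', norm_add_sq_real, inner_smul_right, norm_smul, hx, real_inner_comm, mul_one,
      Real.norm_eq_abs, sq_abs]
  rw [hp, hm] at hsq
  have hl' : l = -(2 * ⟪x, m⟫) := by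
    have : l * (l + 2 * ⟪x, m⟫) = 0 := by linarith
    rcases mul_eq_zero.mp this with h0 | h0 <;> linarith
  rw [hp', hl', neg_smul, sub_eq_add_neg]

/-- Reflections depend in a Lipschitz way on both the mirror and the reflected unit vector. -/
lemma norm_reflection_sub_le_s6 {x₀ x₁ m₀ m₁ : E} (hx₀ : ‖x₀‖ = 1) (hx₁ : ‖x₁‖ = 1)
    (hm₀ : ‖m₀‖ = 1) :
    ‖(m₁ - (2 * ⟪x₁, m₁⟫) • x₁) - (m₀ - (2 * ⟪x₀, m₀⟫) • x₀)‖
      ≤ 3 * ‖m₁ - m₀‖ + 4 * ‖x₁ - x₀‖ := by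
  have key : (m₁ - (2 * ⟪x₁, m₁⟫) • x₁) - (m₀ - (2 * ⟪x₀, m₀⟫) • x₀)
      = (m₁ - m₀) - (2 * ⟪x₁, m₁ - m₀⟫) • x₁
        - (2 * ⟪x₁, m₀⟫) • (x₁ - x₀) - (2 * ⟪x₁ - x₀, m₀⟫) • x₀ := by
    rw [inner_sub_right, inner_sub_left]
    module
  have h1 := abs_real_inner_le_norm x₁ (m₁ - m₀)
  have h2 := abs_real_inner_le_norm x₁ m₀
  have h3 := abs_real_inner_le_norm (x₁ - x₀) m₀
  rw [hx₁, one_mul] at h1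
  rw [hx₁, hm₀, one_mul] at h2
  rw [hm₀, mul_one] at h3
  have n1 : ‖(2 * ⟪x₁, m₁ - m₀⟫) • x₁‖ ≤ 2 * ‖m₁ - m₀‖ := by
    rw [norm_smul, hx₁, Real.norm_eq_abs, abs_mul, abs_two]
    linarith
  have n2 : ‖(2 * ⟪x₁, m₀⟫) • (x₁ - x₀)‖ ≤ 2 * ‖x₁ - x₀‖ := by
    rw [norm_smul, Real.norm_eq_abs, abs_mul, abs_two]
    nlinarith [norm_nonneg (x₁ - x₀)]
  have n3 : ‖(2 * ⟪x₁ - x₀, m₀⟫) • x₀‖ ≤ 2 * ‖x₁ - x₀‖ := by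
    rw [norm_smul, hx₀, Real.norm_eq_abs, abs_mul, abs_two]
    linarith
  rw [key]
  have t1 := norm_sub_le (m₁ - m₀) ((2 * ⟪x₁, m₁ - m₀⟫) • x₁)
  have t2 := norm_sub_le ((m₁ - m₀) - (2 * ⟪x₁, m₁ - m₀⟫) • x₁) ((2 * ⟪x₁, m₀⟫) • (x₁ - x₀))
  have t3 := norm_sub_le ((m₁ - m₀) - (2 * ⟪x₁, m₁ - m₀⟫) • x₁ - (2 * ⟪x₁, m₀⟫) • (x₁ - x₀))
    ((2 * ⟪x₁ - x₀, m₀⟫) • x₀)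
  linarith

end Reflection

/-- Let `U ⊆ Sⁿ`, `k ∈ (0,1]`, and `t⁺, t⁻ : U → Sⁿ` with
`t⁺(x) − t⁻(x) = λ(x)x`, `λ(x) > 0`, and `x·t⁺(x) ≥ k` on `U`. Fix `ε ∈ (0, k/2)` and
`δ ∈ (0,1)` such that `|x₁ − x₀| < δ` implies `|t⁺(x₁) − t⁺(x₀)| < ε` on `U`. If `t⁻` is
Hölder on `U` with exponent `α ∈ (0,1]` and constant `C⁻ ≥ 0`, then for all `x₀, x₁ ∈ U`
with `|x₁ − x₀| < δ`, `|t⁺(x₁) − t⁺(x₀)| ≤ (1 + 2/k)(C⁻ + 2)|x₁ − x₀|^α`. -/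
theorem tPlus_holder_of_tMinus_holder (n : ℕ)
    (U : Set (EuclideanSpace ℝ (Fin (n + 1))))
    (hU : U ⊆ Metric.sphere (0 : EuclideanSpace ℝ (Fin (n + 1))) 1)
    (k : ℝ) (hk0 : 0 < k) (hk1 : k ≤ 1)
    (tp tm : EuclideanSpace ℝ (Fin (n + 1)) → EuclideanSpace ℝ (Fin (n + 1)))
    (htp : ∀ x ∈ U, tp x ∈ Metric.sphere (0 : EuclideanSpace ℝ (Fin (n + 1))) 1)
    (htm : ∀ x ∈ U, tm x ∈ Metric.sphere (0 : EuclideanSpace ℝ (Fin (n + 1))) 1)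
    (hsplit : ∀ x ∈ U, ∃ l : ℝ, 0 < l ∧ tp x - tm x = l • x)
    (hdot : ∀ x ∈ U, k ≤ ⟪x, tp x⟫)
    (ε δ : ℝ) (hε0 : 0 < ε) (hεk : ε < k / 2) (hδ0 : 0 < δ) (hδ1 : δ < 1)
    (hmod : ∀ x₀ ∈ U, ∀ x₁ ∈ U, ‖x₁ - x₀‖ < δ → ‖tp x₁ - tp x₀‖ < ε)
    (α : ℝ) (hα0 : 0 < α) (hα1 : α ≤ 1)
    (Cm : ℝ) (hCm : 0 ≤ Cm)
    (hHolder : ∀ x₀ ∈ U, ∀ x₁ ∈ U, ‖tm x₁ - tm x₀‖ ≤ Cm * ‖x₁ - x₀‖ ^ α) :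
    ∀ x₀ ∈ U, ∀ x₁ ∈ U, ‖x₁ - x₀‖ < δ →
      ‖tp x₁ - tp x₀‖ ≤ (1 + 2 / k) * (Cm + 2) * ‖x₁ - x₀‖ ^ α := by
  intro x₀ h₀ x₁ h₁ hd
  have hx : ∀ x ∈ U, ‖x‖ = 1 := fun x hxU => mem_sphere_zero_iff_norm.mp (hU hxU)
  have hm : ∀ x ∈ U, ‖tm x‖ = 1 := fun x hxU => mem_sphere_zero_iff_norm.mp (htm x hxU)
  have hrefl : ∀ x ∈ U, tp x = tm x - (2 * ⟪x, tm x⟫) • x := by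
    intro x hxU
    obtain ⟨l, hl, h⟩ := hsplit x hxU
    exact eq_reflection (hx x hxU) (mem_sphere_zero_iff_norm.mp (htp x hxU)) (hm x hxU) hl h
  have hbound : ‖tp x₁ - tp x₀‖ ≤ 3 * ‖tm x₁ - tm x₀‖ + 4 * ‖x₁ - x₀‖ := by
    rw [hrefl x₁ h₁, hrefl x₀ h₀]
    exact norm_reflection_sub_le_s6 (hx x₀ h₀) (hx x₁ h₁) (hm x₀ h₀)
  have hH := hHolder x₀ h₀ x₁ h₁
  have hr : ‖x₁ - x₀‖ ≤ ‖x₁ - x₀‖ ^ α :=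
    Real.self_le_rpow_of_le_one (norm_nonneg _) (hd.trans hδ1).le hα1
  have hk : 3 ≤ 1 + 2 / k := by
    have : 2 ≤ 2 / k := by rw [le_div_iff₀ hk0]; linarith
    linarith
  have hr0 : 0 ≤ ‖x₁ - x₀‖ ^ α := (norm_nonneg _).trans hr
  calc ‖tp x₁ - tp x₀‖ ≤ 3 * (Cm + 2) * ‖x₁ - x₀‖ ^ α := by linarith
    _ ≤ (1 + 2 / k) * (Cm + 2) * ‖x₁ - x₀‖ ^ α := by gcongr
end

section
/- Let u, v be vectors in a real inner product space and let α ∈ [0, π/2). If ⟨u, v⟩ ≥ −(sin α)·‖u‖·‖v‖ (equivalently, for nonzero u, v, the angle between u and v is at most π/2 + α), then ‖u + v‖ ≥ ‖u‖·cos α. -/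
open scoped RealInnerProductSpace

/-- Let `u, v` be vectors in a real inner product space and `α ∈ [0, π/2)`.
If `⟨u, v⟩ ≥ −(sin α)‖u‖‖v‖` (i.e. the angle between `u` and `v` is at most `π/2 + α`),
then `‖u + v‖ ≥ ‖u‖ cos α`. -/
theorem norm_add_ge_of_angle_le (E : Type*) [NormedAddCommGroup E] [InnerProductSpace ℝ E]
    (u v : E) (α : ℝ) (hα0 : 0 ≤ α) (hα : α < Real.pi / 2)
    (h : -(Real.sin α) * (‖u‖ * ‖v‖) ≤ ⟪u, v⟫) :
    ‖u‖ * Real.cos α ≤ ‖u + v‖ := by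
  refine le_of_abs_le (abs_le_of_sq_le_sq ?_ (norm_nonneg _))
  -- ‖u + v‖² ≥ ‖u‖² - 2 sin α ‖u‖‖v‖ + ‖v‖² = (‖u‖ cos α)² + (‖u‖ sin α - ‖v‖)²
  have hcos : Real.cos α ^ 2 = 1 - Real.sin α ^ 2 := Real.cos_sq' α
  rw [norm_add_sq_real, mul_pow, hcos]
  linarith [sq_nonneg (‖u‖ * Real.sin α - ‖v‖)]
end

section
/- Let y₀, y₁ be linearly independent unit vectors in ℝⁿ⁺¹ and let γ ∈ (0, π) be the angle between y₀ and y₁. Then for all real numbers a > 0 and b > 0, the angle β between y₁ − y₀ and a·y₁ − b·y₀ satisfies 0 ≤ β < (π − γ)/2. -/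
open InnerProductGeometry

/-!
Write `s = sin (γ / 2) > 0`, so that `⟪y₀, y₁⟫ = cos γ = 1 - 2 s²` and `‖y₁ - y₀‖ = 2 s`. With
`N = ‖a y₁ - b y₀‖`, the inner product of `y₁ - y₀` and `a y₁ - b y₀` is `2 s² (a + b)`, whence
`cos β = s (a + b) / N`. Since `γ < π`, the vectors are not opposite and the triangle inequality
`N < a + b` is strict. Hence `cos β > s = cos ((π - γ) / 2)`, and `cos` is decreasing on `[0, π]`.
-/

/-- Let `y₀, y₁` be linearly independent unit vectors in `ℝⁿ⁺¹` and let
`γ ∈ (0, π)` be the angle between them. Then for all `a, b > 0`, the angle `β` between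
`y₁ − y₀` and `a y₁ − b y₀` satisfies `0 ≤ β < (π − γ)/2`. -/
theorem angle_difference_bound (n : ℕ) (y₀ y₁ : EuclideanSpace ℝ (Fin (n + 1)))
    (hy₀ : ‖y₀‖ = 1) (hy₁ : ‖y₁‖ = 1)
    (hind : LinearIndependent ℝ ![y₀, y₁])
    (γ : ℝ) (hγ : γ = angle y₀ y₁) (hγ0 : 0 < γ) (hγπ : γ < Real.pi) :
    ∀ a b : ℝ, 0 < a → 0 < b →
      0 ≤ angle (y₁ - y₀) (a • y₁ - b • y₀) ∧
      angle (y₁ - y₀) (a • y₁ - b • y₀) < (Real.pi - γ) / 2 := by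
  intro a b ha hb
  refine ⟨angle_nonneg _ _, ?_⟩
  by_contra! hge
  have hs : 0 < Real.sin (γ / 2) := Real.sin_pos_of_pos_of_lt_pi (by linarith) (by linarith)
  have hc : 0 < Real.cos (γ / 2) := Real.cos_pos_of_mem_Ioo ⟨by linarith, by linarith⟩
  have hcs := Real.sin_sq_add_cos_sq (γ / 2)
  have hcos : Real.cos (angle (y₁ - y₀) (a • y₁ - b • y₀)) ≤ Real.sin (γ / 2) := by
    rw [← Real.cos_pi_div_two_sub]
    exact Real.cos_le_cos_of_nonneg_of_le_pi (by linarith) (angle_le_pi _ _) (by linarith)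
  have h01 : inner ℝ y₀ y₁ = 1 - 2 * Real.sin (γ / 2) ^ 2 := by
    rw [inner_eq_cos_angle_of_norm_eq_one hy₀ hy₁, ← hγ, show γ = 2 * (γ / 2) by ring,
      Real.cos_two_mul, show 2 * (γ / 2) / 2 = γ / 2 by ring]
    linarith
  have h10 : inner ℝ y₁ y₀ = 1 - 2 * Real.sin (γ / 2) ^ 2 := by rw [real_inner_comm, h01]
  have hin : inner ℝ (y₁ - y₀) (a • y₁ - b • y₀) = 2 * Real.sin (γ / 2) ^ 2 * (a + b) := by
    simp only [inner_sub_left, inner_sub_right, inner_smul_right, real_inner_self_eq_norm_sq,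
      hy₀, hy₁, h01, h10]
    ring
  have hd : ‖y₁ - y₀‖ = 2 * Real.sin (γ / 2) := by
    rw [← sq_eq_sq₀ (norm_nonneg _) (by positivity), norm_sub_sq_real, hy₀, hy₁, h10]
    ring
  have hN : ‖a • y₁ - b • y₀‖ < a + b := by
    refine lt_of_pow_lt_pow_left₀ 2 (by positivity) ?_
    rw [norm_sub_sq_real, norm_smul, norm_smul, inner_smul_left, inner_smul_right, hy₀, hy₁, h10,
      Real.norm_of_nonneg ha.le, Real.norm_of_nonneg hb.le]
    -- The gap `(a + b)² - N²` equals `4 a b cos² (γ / 2)`.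
    have : 0 < a * b * Real.cos (γ / 2) ^ 2 := by positivity
    rw [show Real.cos (γ / 2) ^ 2 = 1 - Real.sin (γ / 2) ^ 2 by linarith] at this
    simp only [conj_trivial]
    linarith
  have hmul := cos_angle_mul_norm_mul_norm (y₁ - y₀) (a • y₁ - b • y₀)
  rw [hin, hd] at hmul
  have h1 := mul_le_mul_of_nonneg_right hcos
    (show 0 ≤ 2 * Real.sin (γ / 2) * ‖a • y₁ - b • y₀‖ by positivity)
  have h2 := mul_lt_mul_of_pos_left hN (show 0 < 2 * Real.sin (γ / 2) ^ 2 by positivity)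
  linarith
end

section
/- (Dichotomy) Under the hypotheses below, there exist an integer M ≥ m₀ and a constant K > 0 such that for every integer m > M and every y ∈ Θ_m(y₁), one has |s⁺(y₁) − s⁺(y)| ≥ K·|y₁ − y|. -/
/-!
Write `a = ω y₁`, `b = ω y`, `d = y₁ - y` and `w = a y₁ - b y`. For unit vectors one has
`⟪d, w⟫ = (a + b) / 2 * ‖d‖²`, while an angle of at least `π / 2 - 1 / m` between `d` and `w` forces
`⟪d, w⟫ ≤ ‖d‖ * ‖w‖ / m`. As `a, b ≥ ϖ`, this gives `m * ϖ * ‖d‖ ≤ ‖w‖`. On the other hand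
`w = (a - b) y₁ + b d` and `b = ‖s⁺ y - s⁻ y‖ ≤ 2`, so `‖w‖ ≤ |a - b| + 2 * ‖d‖`, and therefore
`(m * ϖ - 2) * ‖d‖ ≤ |a - b|`. Comparison with the assumed upper bound on `|a - b|` yields
`‖s⁺ y₁ - s⁺ y‖ ≥ (k' / 2 * (m * ϖ - 2) - 2) * ‖d‖`, and for large `m` the factor is at least `1`.
-/

open InnerProductGeometry

/-- If the angle between two vectors is at least `π / 2 - ε` and at most `π / 2`, then their inner
product is at most `ε` times the product of their norms. -/
lemma inner_le_of_angle_near_right {E : Type*} [NormedAddCommGroup E] [InnerProductSpace ℝ E]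
    (u v : E) (ε : ℝ) (h1 : Real.pi / 2 - ε ≤ angle u v) (h2 : angle u v ≤ Real.pi / 2) :
    inner ℝ u v ≤ ε * (‖u‖ * ‖v‖) := by
  rw [← cos_angle_mul_norm_mul_norm u v]
  have hcos : Real.cos (angle u v) ≤ ε := by
    rw [← Real.sin_pi_div_two_sub]
    have := Real.sin_le (x := Real.pi / 2 - angle u v) (by linarith)
    linarith
  gcongr

lemma inner_sub_smul_sub_of_unit {E : Type*} [NormedAddCommGroup E] [InnerProductSpace ℝ E]
    (x y : E) (hx : ‖x‖ = 1) (hy : ‖y‖ = 1) (a b : ℝ) :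
    inner ℝ (x - y) (a • x - b • y) = (a + b) / 2 * ‖x - y‖ ^ 2 := by
  rw [norm_sub_sq_real]
  simp only [inner_sub_left, inner_sub_right, real_inner_smul_right, real_inner_self_eq_norm_sq,
    hx, hy, real_inner_comm x y]
  ring


/-- **Dichotomy.** Let `V ⊆ Sⁿ`, `y₁ ∈ V`, `s⁺, s⁻ : V → Sⁿ` and `ω : V → ℝ`
with `ω > 0` and `s⁺(y) = s⁻(y) + ω(y)y` on `V`. For `y ∈ V` with `y ≠ y₁` and
`ω(y₁)y₁ ≠ ω(y)y`, let `β(y,y₁)` be the angle between `y₁ − y` and `ω(y₁)y₁ − ω(y)y`, and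
let `Θ_m(y₁)` be the set of `y ∈ V` with `β(y,y₁) ∈ [π/2 − 1/m, π/2]`. Assume `ω(y₁) ≥ ϖ`
and, on `Θ_{m₀}(y₁)`: `ω(y) ≥ ϖ` and `|ω(y₁) − ω(y)| ≤ (2/k')(|s⁺(y₁) − s⁺(y)| + 2|y₁ − y|)`.
Then there exist an integer `M ≥ m₀` and `K > 0` such that `|s⁺(y₁) − s⁺(y)| ≥ K|y₁ − y|`
for every `m > M` and `y ∈ Θ_m(y₁)`. -/
theorem dichotomy (n : ℕ) (hn : 1 < n)
    (V : Set (EuclideanSpace ℝ (Fin (n + 1))))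
    (hV : V ⊆ Metric.sphere (0 : EuclideanSpace ℝ (Fin (n + 1))) 1)
    (y₁ : EuclideanSpace ℝ (Fin (n + 1))) (hy₁ : y₁ ∈ V)
    (sp sm : EuclideanSpace ℝ (Fin (n + 1)) → EuclideanSpace ℝ (Fin (n + 1)))
    (ω : EuclideanSpace ℝ (Fin (n + 1)) → ℝ)
    (hsp : ∀ y ∈ V, sp y ∈ Metric.sphere (0 : EuclideanSpace ℝ (Fin (n + 1))) 1)
    (hsm : ∀ y ∈ V, sm y ∈ Metric.sphere (0 : EuclideanSpace ℝ (Fin (n + 1))) 1)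
    (hω : ∀ y ∈ V, 0 < ω y)
    (hsplit : ∀ y ∈ V, sp y = sm y + ω y • y)
    (m₀ : ℕ) (hm₀ : 1 < m₀) (ϖ k' : ℝ) (hϖ : 0 < ϖ) (hk' : 0 < k')
    (hωy₁ : ϖ ≤ ω y₁)
    (hΘ : ∀ y ∈ V, y ≠ y₁ → ω y₁ • y₁ ≠ ω y • y →
      Real.pi / 2 - 1 / (m₀ : ℝ) ≤ angle (y₁ - y) (ω y₁ • y₁ - ω y • y) →
      angle (y₁ - y) (ω y₁ • y₁ - ω y • y) ≤ Real.pi / 2 →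
      ϖ ≤ ω y ∧ |ω y₁ - ω y| ≤ 2 / k' * (‖sp y₁ - sp y‖ + 2 * ‖y₁ - y‖)) :
    ∃ M : ℕ, m₀ ≤ M ∧ ∃ K : ℝ, 0 < K ∧
      ∀ m : ℕ, M < m → ∀ y ∈ V, y ≠ y₁ → ω y₁ • y₁ ≠ ω y • y →
        Real.pi / 2 - 1 / (m : ℝ) ≤ angle (y₁ - y) (ω y₁ • y₁ - ω y • y) →
        angle (y₁ - y) (ω y₁ • y₁ - ω y • y) ≤ Real.pi / 2 →
        K * ‖y₁ - y‖ ≤ ‖sp y₁ - sp y‖ := by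
  -- `m * ϖ ≥ 2 + 6 / k'` makes the factor `k' / 2 * (m * ϖ - 2) - 2` at least `1`.
  obtain ⟨N, hN⟩ := exists_nat_ge ((2 + 6 / k') / ϖ)
  refine ⟨max m₀ N, le_max_left _ _, 1, one_pos, ?_⟩
  intro m hm y hy hne hwne hlo hhi
  have hm₀m : (m₀ : ℝ) ≤ m := by exact_mod_cast (le_max_left m₀ N).trans hm.le
  have hNm : (N : ℝ) ≤ m := by exact_mod_cast (le_max_right m₀ N).trans hm.le
  have hm₀pos : (0 : ℝ) < m₀ := by exact_mod_cast (by omega : 0 < m₀)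
  have hmpos : (0 : ℝ) < m := hm₀pos.trans_le hm₀m
  have hinv : 1 / (m : ℝ) ≤ 1 / (m₀ : ℝ) := one_div_le_one_div_of_le hm₀pos hm₀m
  obtain ⟨hωy, hdiff⟩ := hΘ y hy hne hwne (by linarith) hhi
  have n1 : ‖y₁‖ = 1 := by simpa using hV hy₁
  have ny : ‖y‖ = 1 := by simpa using hV hy
  have hd : 0 < ‖y₁ - y‖ := norm_pos_iff.mpr (sub_ne_zero.mpr hne.symm)
  have hb : ω y ≤ 2 := by
    have hp : ‖sp y‖ = 1 := by simpa using hsp y hy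
    have hq : ‖sm y‖ = 1 := by simpa using hsm y hy
    have heq : ω y • y = sp y - sm y := by rw [hsplit y hy]; abel
    have hn := norm_sub_le (sp y) (sm y)
    rw [← heq, norm_smul, ny, Real.norm_of_nonneg (hω y hy).le] at hn
    linarith
  have hlow : m * ϖ * ‖y₁ - y‖ ≤ ‖ω y₁ • y₁ - ω y • y‖ := by
    have hi := inner_le_of_angle_near_right _ _ _ hlo hhi
    rw [inner_sub_smul_sub_of_unit _ _ n1 ny] at hi
    have h1 : ϖ * ‖y₁ - y‖ ^ 2 ≤ (ω y₁ + ω y) / 2 * ‖y₁ - y‖ ^ 2 := by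
      gcongr
      linarith
    have h2 : m * (ϖ * ‖y₁ - y‖ ^ 2) ≤ ‖y₁ - y‖ * ‖ω y₁ • y₁ - ω y • y‖ := by
      have h3 := mul_le_mul_of_nonneg_left (h1.trans hi) hmpos.le
      rwa [← mul_assoc (m : ℝ) (1 / (m : ℝ)), mul_one_div_cancel hmpos.ne', one_mul] at h3
    refine le_of_mul_le_mul_left ?_ hd
    linarith
  have hup : ‖ω y₁ • y₁ - ω y • y‖ ≤ |ω y₁ - ω y| + 2 * ‖y₁ - y‖ := by
    have heq : ω y₁ • y₁ - ω y • y = (ω y₁ - ω y) • y₁ + ω y • (y₁ - y) := by module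
    rw [heq]
    refine (norm_add_le _ _).trans ?_
    rw [norm_smul, norm_smul, n1, Real.norm_of_nonneg (hω y hy).le, Real.norm_eq_abs, mul_one]
    gcongr
  have hmϖ : 2 + 6 / k' ≤ m * ϖ := (div_le_iff₀ hϖ).mp (hN.trans hNm)
  have hkey : 6 / k' * ‖y₁ - y‖ ≤ 2 / k' * (‖sp y₁ - sp y‖ + 2 * ‖y₁ - y‖) := by
    have := mul_le_mul_of_nonneg_right hmϖ hd.le
    linarith
  have hfin : 2 / k' * (3 * ‖y₁ - y‖) ≤ 2 / k' * (‖sp y₁ - sp y‖ + 2 * ‖y₁ - y‖) := by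
    refine le_of_eq_of_le ?_ hkey
    ring
  have := le_of_mul_le_mul_left hfin (by positivity)
  linarith
end

section
/- (Quantified injectivity of s⁺ on the bivalent target) Under the hypotheses below, there exists a constant Ĉ⁺ > 0 such that |s⁺(y₁) − s⁺(y₀)| ≥ Ĉ⁺·|y₁ − y₀|^{4n−1} for all y₀, y₁ ∈ V with |y₁ − y₀| < γ₀. -/
/-!
Write `d = y₁ - y₀`, `a = s⁻(y₁) - s⁻(y₀)`, `b = ω(y₁)y₁ - ω(y₀)y₀`, so that
`s⁺(y₁) - s⁺(y₀) = a + b`. If the angle between `d` and `b` exceeds `β₀`, the dichotomy gives a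
linear lower bound, which is stronger than the Hölder one because `|d| ≤ 2` on the sphere.
Otherwise `b·d ≥ cos β₀ |b||d|`; as `a·d ≥ 0` by monotonicity, Cauchy–Schwarz gives
`|a + b| ≥ cos β₀ |b|`, so `a` and `b` cannot cancel: `|a|` is at most `(1 + 1 / cos β₀) |a + b|`
(`norm_le_of_inner_nonneg_of_angle_le`), and the bound for `s⁻` passes to `s⁺`.
-/

open InnerProductGeometry
open scoped RealInnerProductSpace

/-- Absence of cancellation: if `a` lies in the half-space of `d` and `b` in the cone of axis `d`
and half-angle `β`, then `|a|` is controlled by `|a + b|`. The case `b = 0` is separate because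
`angle d 0 = π / 2`. -/
lemma norm_le_of_inner_nonneg_of_angle_le {E : Type*} [NormedAddCommGroup E]
    [InnerProductSpace ℝ E] {a b d : E} {β : ℝ} (hβ0 : 0 ≤ β) (hβ : β < Real.pi / 2)
    (hd : d ≠ 0) (had : 0 ≤ ⟪a, d⟫) (hb : b = 0 ∨ angle d b ≤ β) :
    Real.cos β / (1 + Real.cos β) * ‖a‖ ≤ ‖a + b‖ := by
  have hc : 0 < Real.cos β := Real.cos_pos_of_mem_Ioo ⟨by linarith [Real.pi_pos], hβ⟩
  have hd' : 0 < ‖d‖ := norm_pos_iff.mpr hd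
  have hbd : Real.cos β * ‖b‖ * ‖d‖ ≤ ⟪b, d⟫ := by
    rcases hb with rfl | hb
    · simp
    · have h1 : Real.cos β ≤ Real.cos (angle d b) :=
        Real.cos_le_cos_of_nonneg_of_le_pi (angle_nonneg d b) (by linarith [Real.pi_pos]) hb
      rw [real_inner_comm, ← cos_angle_mul_norm_mul_norm d b]
      calc Real.cos β * ‖b‖ * ‖d‖ = Real.cos β * (‖d‖ * ‖b‖) := by ring
        _ ≤ _ := by gcongr
  have hcb : Real.cos β * ‖b‖ ≤ ‖a + b‖ := by
    refine le_of_mul_le_mul_right ?_ hd'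
    calc Real.cos β * ‖b‖ * ‖d‖ ≤ ⟪a, d⟫ + ⟪b, d⟫ := by linarith
      _ = ⟪a + b, d⟫ := (inner_add_left a b d).symm
      _ ≤ ‖a + b‖ * ‖d‖ := real_inner_le_norm _ _
  have htri : ‖a‖ ≤ ‖a + b‖ + ‖b‖ := by simpa using norm_sub_le (a + b) b
  rw [div_mul_eq_mul_div, div_le_iff₀ (by linarith)]
  nlinarith

/-- **Quantified injectivity of `s⁺` on the bivalent target.**
Let `V ⊆ Sⁿ`, `s⁺, s⁻ : V → Sⁿ`, `ω : V → ℝ` with `ω > 0` and `s⁺(y) = s⁻(y) + ω(y)y`.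
Assume monotonicity of `s⁻`, a reverse Hölder bound for `s⁻` with exponent `4n−1` at scales
below `γ₀`, and the dichotomy estimate for angles exceeding `β₀ ∈ [0, π/2)`. Then there is
`Ĉ⁺ > 0` with `|s⁺(y₁) − s⁺(y₀)| ≥ Ĉ⁺|y₁ − y₀|^{4n−1}` for `y₀, y₁ ∈ V`, `|y₁ − y₀| < γ₀`. -/
theorem sPlus_reverse_holder (n : ℕ) (hn : 1 < n)
    (V : Set (EuclideanSpace ℝ (Fin (n + 1))))
    (hV : V ⊆ Metric.sphere (0 : EuclideanSpace ℝ (Fin (n + 1))) 1)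
    (sp sm : EuclideanSpace ℝ (Fin (n + 1)) → EuclideanSpace ℝ (Fin (n + 1)))
    (ω : EuclideanSpace ℝ (Fin (n + 1)) → ℝ)
    (hsp : ∀ y ∈ V, sp y ∈ Metric.sphere (0 : EuclideanSpace ℝ (Fin (n + 1))) 1)
    (hsm : ∀ y ∈ V, sm y ∈ Metric.sphere (0 : EuclideanSpace ℝ (Fin (n + 1))) 1)
    (hω : ∀ y ∈ V, 0 < ω y)
    (hsplit : ∀ y ∈ V, sp y = sm y + ω y • y)
    (hmono : ∀ y₀ ∈ V, ∀ y₁ ∈ V, 0 ≤ ⟪sm y₁ - sm y₀, y₁ - y₀⟫)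
    (Cm γ₀ : ℝ) (hCm : 0 < Cm) (hγ₀ : 0 < γ₀)
    (hrev : ∀ y₀ ∈ V, ∀ y₁ ∈ V, ‖y₁ - y₀‖ < γ₀ →
      Cm * ‖y₁ - y₀‖ ^ (4 * (n : ℝ) - 1) ≤ ‖sm y₁ - sm y₀‖)
    (β₀ K : ℝ) (hβ₀0 : 0 ≤ β₀) (hβ₀ : β₀ < Real.pi / 2) (hK : 0 < K)
    (hdich : ∀ y₀ ∈ V, ∀ y₁ ∈ V, y₀ ≠ y₁ → ω y₁ • y₁ ≠ ω y₀ • y₀ →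
      β₀ < angle (y₁ - y₀) (ω y₁ • y₁ - ω y₀ • y₀) →
      K * ‖y₁ - y₀‖ ≤ ‖sp y₁ - sp y₀‖) :
    ∃ Cp : ℝ, 0 < Cp ∧ ∀ y₀ ∈ V, ∀ y₁ ∈ V, ‖y₁ - y₀‖ < γ₀ →
      Cp * ‖y₁ - y₀‖ ^ (4 * (n : ℝ) - 1) ≤ ‖sp y₁ - sp y₀‖ := by
  have hc : 0 < Real.cos β₀ := Real.cos_pos_of_mem_Ioo ⟨by linarith [Real.pi_pos], hβ₀⟩
  have hn' : (1 : ℝ) < n := by exact_mod_cast hn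
  have h2 : (0 : ℝ) < 2 ^ (4 * (n : ℝ) - 2) := Real.rpow_pos_of_pos two_pos _
  have hq : 0 < Real.cos β₀ / (1 + Real.cos β₀) := by positivity
  -- The two terms of the minimum are the constants of the large and the small angle case.
  refine ⟨min (K / 2 ^ (4 * (n : ℝ) - 2)) (Real.cos β₀ / (1 + Real.cos β₀) * Cm),
    lt_min (by positivity) (by positivity), fun y₀ h₀ y₁ h₁ hlt => ?_⟩
  rcases eq_or_ne y₀ y₁ with rfl | hne
  · have hp : 4 * (n : ℝ) - 1 ≠ 0 := by linarith
    simp [Real.zero_rpow hp]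
  have hd : y₁ - y₀ ≠ 0 := sub_ne_zero.mpr hne.symm
  have hd' : 0 < ‖y₁ - y₀‖ := norm_pos_iff.mpr hd
  have hpow : 0 ≤ ‖y₁ - y₀‖ ^ (4 * (n : ℝ) - 1) := by positivity
  by_cases hb : ω y₁ • y₁ - ω y₀ • y₀ = 0 ∨ angle (y₁ - y₀) (ω y₁ • y₁ - ω y₀ • y₀) ≤ β₀
  · have key := norm_le_of_inner_nonneg_of_angle_le hβ₀0 hβ₀ hd (hmono y₀ h₀ y₁ h₁) hb
    have heq : sp y₁ - sp y₀ = sm y₁ - sm y₀ + (ω y₁ • y₁ - ω y₀ • y₀) := by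
      rw [hsplit y₁ h₁, hsplit y₀ h₀]; abel
    rw [heq]
    refine le_trans ?_ key
    refine (mul_le_mul_of_nonneg_right (min_le_right _ _) hpow).trans ?_
    rw [mul_assoc]
    exact mul_le_mul_of_nonneg_left (hrev y₀ h₀ y₁ h₁ hlt) hq.le
  · obtain ⟨hb0, hang⟩ := not_or.mp hb
    have hle2 : ‖y₁ - y₀‖ ≤ 2 := by
      have e₀ : ‖y₀‖ = 1 := by simpa using hV h₀
      have e₁ : ‖y₁‖ = 1 := by simpa using hV h₁
      linarith [norm_sub_le y₁ y₀]
    have hsplit_pow : ‖y₁ - y₀‖ ^ (4 * (n : ℝ) - 1)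
        = ‖y₁ - y₀‖ ^ (4 * (n : ℝ) - 2) * ‖y₁ - y₀‖ := by
      rw [← Real.rpow_add_one hd'.ne']; congr 1; ring
    refine le_trans ?_ (hdich y₀ h₀ y₁ h₁ hne (sub_ne_zero.mp hb0) (not_le.mp hang))
    refine (mul_le_mul_of_nonneg_right (min_le_left _ _) hpow).trans ?_
    rw [hsplit_pow, ← mul_assoc]
    refine mul_le_mul_of_nonneg_right ?_ hd'.le
    rw [div_mul_eq_mul_div, div_le_iff₀ h2]
    exact mul_le_mul_of_nonneg_left
      (Real.rpow_le_rpow hd'.le hle2 (by linarith)) hK.le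
end

section
/- Let y, y₁ be unit vectors in ℝⁿ⁺¹ with y ≠ y₁, and let a, b > 0 be real numbers with a·y₁ ≠ b·y. Let β be the angle between y₁ − y and a·y₁ − b·y. Then |a·y₁ − b·y|·sin β ≤ |a − b|. -/
open InnerProductGeometry

/-! For nonzero `u`, the quantity `‖v‖ * sin (angle u v)` is the length of the projection of `v`
orthogonal to `u`, so it does not change when a multiple of `u` is added to `v`. With `u = y₁ - y`,
the vectors `a • y₁ - b • y` and `(a - b) • y₁` differ by `b • u`, and the latter has norm `|a - b|`.
The invariance is expressed through the Gram determinant, whose square root is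
`sin (angle u v) * (‖u‖ * ‖v‖)`. -/

/-- The area of the parallelogram spanned by `u` and `v` is invariant under the shear
`v ↦ v + c • u`. -/
lemma sin_angle_mul_norm_add_smul {V : Type*} [NormedAddCommGroup V] [InnerProductSpace ℝ V]
    (u v : V) (c : ℝ) :
    Real.sin (angle u (v + c • u)) * (‖u‖ * ‖v + c • u‖) =
      Real.sin (angle u v) * (‖u‖ * ‖v‖) := by
  rw [sin_angle_mul_norm_mul_norm, sin_angle_mul_norm_mul_norm]
  congr 1
  simp only [inner_add_left, inner_add_right, real_inner_smul_left, real_inner_smul_right,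
    real_inner_comm u v]
  ring

/-- Let `y, y₁` be unit vectors in `ℝⁿ⁺¹` with `y ≠ y₁`, and `a, b > 0`
with `a y₁ ≠ b y`. If `β` is the angle between `y₁ − y` and `a y₁ − b y`, then
`|a y₁ − b y| sin β ≤ |a − b|`. -/
theorem norm_mul_sin_angle_le (n : ℕ)
    (y y₁ : EuclideanSpace ℝ (Fin (n + 1)))
    (hy : ‖y‖ = 1) (hy₁ : ‖y₁‖ = 1) (hne : y ≠ y₁)
    (a b : ℝ) (ha : 0 < a) (hb : 0 < b) (hab : a • y₁ ≠ b • y) :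
    ‖a • y₁ - b • y‖ * Real.sin (angle (y₁ - y) (a • y₁ - b • y)) ≤ |a - b| := by
  have hu : 0 < ‖y₁ - y‖ := norm_pos_iff.mpr (sub_ne_zero.mpr hne.symm)
  have hv : a • y₁ - b • y = (a - b) • y₁ + b • (y₁ - y) := by module
  have hnorm : ‖(a - b) • y₁‖ = |a - b| := by
    rw [norm_smul, hy₁, mul_one, Real.norm_eq_abs]
  have hshear := sin_angle_mul_norm_add_smul (y₁ - y) ((a - b) • y₁) b
  rw [← hv, hnorm] at hshear
  refine le_of_mul_le_mul_left ?_ hu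
  calc ‖y₁ - y‖ * (‖a • y₁ - b • y‖ * Real.sin (angle (y₁ - y) (a • y₁ - b • y)))
      = Real.sin (angle (y₁ - y) ((a - b) • y₁)) * (‖y₁ - y‖ * |a - b|) := by
        rw [← hshear]; ring
    _ ≤ ‖y₁ - y‖ * |a - b| := mul_le_of_le_one_left (by positivity) (Real.sin_le_one _)
end

section
/- For all x₀, x₁ ∈ U with |x₁ − x₀| < δ, the splitting function λ satisfies |λ(x₁) − λ(x₀)| ≤ (2/k)·(|t⁺(x₁) − t⁺(x₀)| + 2|x₁ − x₀|). -/
/-! Since `t⁺(x)`, `t⁻(x)` and `x` are unit vectors, `λ(x) = 2 x·t⁺(x)`. Hence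
`λ(x₁) - λ(x₀) = 2 (x₁·(t⁺(x₁) - t⁺(x₀)) + (x₁ - x₀)·t⁺(x₀))`, and Cauchy–Schwarz bounds this by
`2 (|t⁺(x₁) - t⁺(x₀)| + |x₁ - x₀|)`; the stated bound is weaker because `k ≤ 1`. -/

open scoped RealInnerProductSpace

/-- For unit vectors `x`, `p`, `m` with `p - m = l • x` and `l ≠ 0`, expanding
`‖p - l • x‖² = ‖m‖² = 1` gives `l² = 2 l ⟪x, p⟫`, which determines `l`. -/
lemma splitting_eq_two_mul_inner {E : Type*} [NormedAddCommGroup E] [InnerProductSpace ℝ E]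
    {x p m : E} {l : ℝ} (hx : ‖x‖ = 1) (hp : ‖p‖ = 1) (hm : ‖m‖ = 1) (hl : l ≠ 0)
    (h : p - m = l • x) : l = 2 * ⟪x, p⟫ := by
  have hm' : m = p - l • x := by rw [← h]; abel
  have h1 := norm_sub_sq_real p (l • x)
  rw [← hm', hm, hp, inner_smul_right, norm_smul, hx, mul_one, Real.norm_eq_abs, sq_abs,
    real_inner_comm] at h1
  apply mul_left_cancel₀ hl
  linarith

/-- Let `U ⊆ Sⁿ`, `k ∈ (0,1]`, and `t⁺, t⁻ : U → Sⁿ` with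
`t⁺(x) − t⁻(x) = λ(x)x`, `λ(x) > 0`, and `x·t⁻(x) ≤ −k` on `U`. Fix `ε ∈ (0, k/2)` and
`δ ∈ (0,1)` such that `|x₁ − x₀| < δ` implies `|t⁻(x₁) − t⁻(x₀)| < ε` on `U`. Then for all
`x₀, x₁ ∈ U` with `|x₁ − x₀| < δ`, the splitting function `λ` satisfies
`|λ(x₁) − λ(x₀)| ≤ (2/k)(|t⁺(x₁) − t⁺(x₀)| + 2|x₁ − x₀|)`. -/
theorem lambda_estimate (n : ℕ)
    (U : Set (EuclideanSpace ℝ (Fin (n + 1))))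
    (hU : U ⊆ Metric.sphere (0 : EuclideanSpace ℝ (Fin (n + 1))) 1)
    (k : ℝ) (hk0 : 0 < k) (hk1 : k ≤ 1)
    (tp tm : EuclideanSpace ℝ (Fin (n + 1)) → EuclideanSpace ℝ (Fin (n + 1)))
    (htp : ∀ x ∈ U, tp x ∈ Metric.sphere (0 : EuclideanSpace ℝ (Fin (n + 1))) 1)
    (htm : ∀ x ∈ U, tm x ∈ Metric.sphere (0 : EuclideanSpace ℝ (Fin (n + 1))) 1)
    (lam : EuclideanSpace ℝ (Fin (n + 1)) → ℝ)
    (hlam : ∀ x ∈ U, 0 < lam x ∧ tp x - tm x = lam x • x)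
    (hdot : ∀ x ∈ U, ⟪x, tm x⟫ ≤ -k)
    (ε δ : ℝ) (hε0 : 0 < ε) (hεk : ε < k / 2) (hδ0 : 0 < δ) (hδ1 : δ < 1)
    (hmod : ∀ x₀ ∈ U, ∀ x₁ ∈ U, ‖x₁ - x₀‖ < δ → ‖tm x₁ - tm x₀‖ < ε) :
    ∀ x₀ ∈ U, ∀ x₁ ∈ U, ‖x₁ - x₀‖ < δ →
      |lam x₁ - lam x₀| ≤ 2 / k * (‖tp x₁ - tp x₀‖ + 2 * ‖x₁ - x₀‖) := by
  intro x₀ h₀ x₁ h₁ _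
  have nx : ∀ x ∈ U, ‖x‖ = 1 := fun x hx => by simpa using hU hx
  have np : ∀ x ∈ U, ‖tp x‖ = 1 := fun x hx => by simpa using htp x hx
  have nm : ∀ x ∈ U, ‖tm x‖ = 1 := fun x hx => by simpa using htm x hx
  have hl : ∀ x ∈ U, lam x = 2 * ⟪x, tp x⟫ := fun x hx =>
    splitting_eq_two_mul_inner (nx x hx) (np x hx) (nm x hx) (hlam x hx).1.ne' (hlam x hx).2
  have hdiff : lam x₁ - lam x₀ = 2 * (⟪x₁, tp x₁ - tp x₀⟫ + ⟪x₁ - x₀, tp x₀⟫) := by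
    rw [hl x₁ h₁, hl x₀ h₀, inner_sub_right, inner_sub_left]
    ring
  have ha := abs_real_inner_le_norm x₁ (tp x₁ - tp x₀)
  have hb := abs_real_inner_le_norm (x₁ - x₀) (tp x₀)
  rw [nx x₁ h₁, one_mul] at ha
  rw [np x₀ h₀, mul_one] at hb
  have hk : 2 ≤ 2 / k := by
    rw [le_div_iff₀ hk0]
    linarith
  calc |lam x₁ - lam x₀|
      = 2 * |⟪x₁, tp x₁ - tp x₀⟫ + ⟪x₁ - x₀, tp x₀⟫| := by
        rw [hdiff, abs_mul, abs_two]
    _ ≤ 2 * (‖tp x₁ - tp x₀‖ + 2 * ‖x₁ - x₀‖) := by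
        have := abs_add_le ⟪x₁, tp x₁ - tp x₀⟫ ⟪x₁ - x₀, tp x₀⟫
        linarith [norm_nonneg (x₁ - x₀)]
    _ ≤ 2 / k * (‖tp x₁ - tp x₀‖ + 2 * ‖x₁ - x₀‖) := by gcongr
end
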